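/- arXiv:quant-ph/0406196 — 4 statements merged into one kernel-verified Lean document; each statement's English description precedes it below -/
import Mathlib

section
/- The number of n-qubit pure stabilizer states equals 2^n · ∏_{k=0}^{n-1} (2^{n-k} + 1). Precisely: the number of one-dimensional subspaces W of ℂ^(2^n) such that the set of P ∈ P_n with Pψ = ψ for every ψ ∈ W has cardinality exactly 2^n, equals 2^n · ∏_{k=0}^{n-1} (2^{n-k} + 1). -/
open Matrix

noncomputable section

/-- The space of `n`-qubit operators: `2^n × 2^n` complex matrices, with rows and
columns indexed by bit strings of length `n`. -/
abbrev QMat (n : ℕ) := Matrix (Fin n → Fin 2) (Fin n → Fin 2) ℂ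

/-- Pauli X. -/
def pX : Matrix (Fin 2) (Fin 2) ℂ := !![0, 1; 1, 0]

/-- Pauli Y. -/
def pY : Matrix (Fin 2) (Fin 2) ℂ := !![0, -Complex.I; Complex.I, 0]

/-- Pauli Z. -/
def pZ : Matrix (Fin 2) (Fin 2) ℂ := !![1, 0; 0, -1]

/-- The Hadamard gate. -/
def hGate : Matrix (Fin 2) (Fin 2) ℂ := (Real.sqrt 2 : ℂ)⁻¹ • !![1, 1; 1, -1]

/-- The phase gate. -/
def phGate : Matrix (Fin 2) (Fin 2) ℂ := !![1, 0; 0, Complex.I]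

/-- Kronecker product of a family of `n` one-qubit matrices. -/
def kron {n : ℕ} (P : Fin n → Matrix (Fin 2) (Fin 2) ℂ) : QMat n :=
  Matrix.of fun x y => ∏ j, P j (x j) (y j)

/-- A one-qubit gate `M` acting on qubit `a`, tensored with identity elsewhere. -/
def onQubit {n : ℕ} (a : Fin n) (M : Matrix (Fin 2) (Fin 2) ℂ) : QMat n :=
  kron fun j => if j = a then M else 1

/-- The CNOT gate with control `a` and target `b`. -/
def cnotGate {n : ℕ} (a b : Fin n) : QMat n :=
  Matrix.of fun x y => if x = Function.update y b (y b + y a) then 1 else 0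

/-- The generating gates of the Clifford group: Hadamard, phase, and CNOT gates. -/
def gateSet (n : ℕ) : Set (QMat n) :=
  {M | (∃ a, M = onQubit a hGate) ∨ (∃ a, M = onQubit a phGate) ∨
       (∃ a b, a ≠ b ∧ M = cnotGate a b)}

/-- The `n`-qubit Clifford group: all products of Hadamard, phase, and CNOT gates
(each generator has finite order, so the generated submonoid is the generated group). -/
def CliffordGroup (n : ℕ) : Submonoid (QMat n) := Submonoid.closure (gateSet n)

/-- The `n`-qubit Pauli group. -/
def PauliGroup (n : ℕ) : Set (QMat n) :=
  {M | ∃ α : ℂ, (α = 1 ∨ α = -1 ∨ α = Complex.I ∨ α = -Complex.I) ∧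
    ∃ P : Fin n → Matrix (Fin 2) (Fin 2) ℂ,
      (∀ j, P j = 1 ∨ P j = pX ∨ P j = pY ∨ P j = pZ) ∧ M = α • kron P}

/-- A Pauli operator with real phase `±1`. -/
def IsRealPauli (n : ℕ) (P : QMat n) : Prop :=
  ∃ ε : ℂ, (ε = 1 ∨ ε = -1) ∧ ∃ Q : Fin n → Matrix (Fin 2) (Fin 2) ℂ,
    (∀ j, Q j = 1 ∨ Q j = pX ∨ Q j = pY ∨ Q j = pZ) ∧ P = ε • kron Q

/-- The matrix in `QMat (n + 1)` with the given four blocks, split along the first qubit. -/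
def blockMat {n : ℕ} (A B C D : QMat n) : QMat (n + 1) :=
  Matrix.of fun x y =>
    (!![A, B; C, D] : Matrix (Fin 2) (Fin 2) (QMat n)) (x 0) (y 0) (Fin.tail x) (Fin.tail y)

/-- The vector on `n + 1` qubits with the given two halves, split along the first qubit. -/
def joinVec {n : ℕ} (a b : (Fin n → Fin 2) → ℂ) : (Fin (n + 1) → Fin 2) → ℂ :=
  fun x => (![a, b] : Fin 2 → (Fin n → Fin 2) → ℂ) (x 0) (Fin.tail x)

section Blocks

variable {n : ℕ}

theorem sum_bits_succ (f : (Fin (n + 1) → Fin 2) → ℂ) :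
    ∑ x, f x = ∑ x : Fin n → Fin 2, f (Fin.cons 0 x) + ∑ x : Fin n → Fin 2, f (Fin.cons 1 x) := by
  rw [← (Fin.consEquiv fun _ => Fin 2).sum_comp, Fintype.sum_prod_type, Fin.sum_univ_two]
  rfl

theorem forall_bits_succ {p : (Fin (n + 1) → Fin 2) → Prop} :
    (∀ x, p x) ↔ (∀ x : Fin n → Fin 2, p (Fin.cons 0 x)) ∧ ∀ x : Fin n → Fin 2, p (Fin.cons 1 x) := by
  rw [Fin.forall_fin_succ_pi, Fin.forall_fin_two]

theorem blockMat_inj {A B C D A' B' C' D' : QMat n} :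
    blockMat A B C D = blockMat A' B' C' D' ↔ A = A' ∧ B = B' ∧ C = C' ∧ D = D' := by
  constructor
  · intro h
    have key (i j : Fin 2) (x y : Fin n → Fin 2) := congrFun₂ h (Fin.cons i x) (Fin.cons j y)
    refine ⟨?_, ?_, ?_, ?_⟩ <;> ext x y
    · simpa [blockMat] using key 0 0 x y
    · simpa [blockMat] using key 0 1 x y
    · simpa [blockMat] using key 1 0 x y
    · simpa [blockMat] using key 1 1 x y
  · rintro ⟨rfl, rfl, rfl, rfl⟩
    rfl

theorem joinVec_inj {a b a' b' : (Fin n → Fin 2) → ℂ} :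
    joinVec a b = joinVec a' b' ↔ a = a' ∧ b = b' := by
  simp [funext_iff, forall_bits_succ, joinVec]

theorem exists_eq_joinVec (ψ : (Fin (n + 1) → Fin 2) → ℂ) : ∃ a b, ψ = joinVec a b :=
  ⟨fun x => ψ (Fin.cons 0 x), fun x => ψ (Fin.cons 1 x), by
    simp [funext_iff, forall_bits_succ, joinVec]⟩

theorem joinVec_zero : joinVec (0 : (Fin n → Fin 2) → ℂ) 0 = 0 := by
  simp [funext_iff, forall_bits_succ, joinVec]

theorem smul_joinVec (c : ℂ) (a b : (Fin n → Fin 2) → ℂ) :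
    c • joinVec a b = joinVec (c • a) (c • b) := by
  simp [funext_iff, forall_bits_succ, joinVec]

theorem blockMat_mulVec (A B C D : QMat n) (a b : (Fin n → Fin 2) → ℂ) :
    blockMat A B C D *ᵥ joinVec a b = joinVec (A *ᵥ a + B *ᵥ b) (C *ᵥ a + D *ᵥ b) := by
  simp [funext_iff, forall_bits_succ, joinVec, blockMat, mulVec, dotProduct, sum_bits_succ]

theorem blockMat_mul (A B C D A' B' C' D' : QMat n) :
    blockMat A B C D * blockMat A' B' C' D' =
      blockMat (A * A' + B * C') (A * B' + B * D') (C * A' + D * C') (C * B' + D * D') := by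
  simp [← Matrix.ext_iff, forall_bits_succ, blockMat, Matrix.mul_apply, sum_bits_succ]

theorem blockMat_one : blockMat (1 : QMat n) 0 0 1 = 1 := by
  simp [← Matrix.ext_iff, forall_bits_succ, blockMat, Matrix.one_apply, Fin.cons_inj]

theorem smul_blockMat (c : ℂ) (A B C D : QMat n) :
    c • blockMat A B C D = blockMat (c • A) (c • B) (c • C) (c • D) := by
  rw [← Matrix.ext_iff]
  simp [forall_bits_succ, blockMat]

theorem neg_blockMat (A B C D : QMat n) :
    -blockMat A B C D = blockMat (-A) (-B) (-C) (-D) := by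
  rw [← Matrix.ext_iff]
  simp [forall_bits_succ, blockMat]

theorem kron_cons (M : Matrix (Fin 2) (Fin 2) ℂ) (P : Fin n → Matrix (Fin 2) (Fin 2) ℂ) :
    kron (Fin.cons M P : Fin (n + 1) → Matrix (Fin 2) (Fin 2) ℂ) =
      blockMat (M 0 0 • kron P) (M 0 1 • kron P) (M 1 0 • kron P) (M 1 1 • kron P) := by
  rw [← Matrix.ext_iff]
  simp [forall_bits_succ, blockMat, kron, Fin.prod_univ_succ]

end Blocks

theorem mem_pauliGroup_zero {M : QMat 0} :
    M ∈ PauliGroup 0 ↔ M = 1 ∨ M = -1 ∨ M = Complex.I • 1 ∨ M = -Complex.I • 1 := by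
  have hk (P : Fin 0 → Matrix (Fin 2) (Fin 2) ℂ) : kron P = 1 := by
    ext x y
    simp [kron, Matrix.one_apply, Subsingleton.elim x y]
  simp only [PauliGroup, Set.mem_ofPred_eq, hk]
  constructor
  · rintro ⟨α, rfl | rfl | rfl | rfl, P, -, rfl⟩ <;> simp
  · rintro (rfl | rfl | rfl | rfl)
    · exact ⟨1, by simp, 0, by simp, by simp⟩
    · exact ⟨-1, by simp, 0, by simp, by simp⟩
    · exact ⟨Complex.I, by simp, 0, by simp, by simp⟩
    · exact ⟨-Complex.I, by simp, 0, by simp, by simp⟩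

theorem smul_mem_pauliGroup {n : ℕ} {α : ℂ}
    (hα : α = 1 ∨ α = -1 ∨ α = Complex.I ∨ α = -Complex.I) {M : QMat n}
    (hM : M ∈ PauliGroup n) : α • M ∈ PauliGroup n := by
  obtain ⟨β, hβ, P, hP, rfl⟩ := hM
  refine ⟨α * β, ?_, P, hP, smul_smul _ _ _⟩
  rcases hα with rfl | rfl | rfl | rfl <;> rcases hβ with rfl | rfl | rfl | rfl <;> simp

theorem neg_mem_pauliGroup {n : ℕ} {M : QMat n} (hM : M ∈ PauliGroup n) :
    -M ∈ PauliGroup n := by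
  simpa using smul_mem_pauliGroup (α := -1) (by simp) hM

/-- A Pauli operator on `n + 1` qubits is block diagonal or block antidiagonal, with blocks that
are Pauli operators on `n` qubits and agree up to sign. -/
theorem mem_pauliGroup_succ {n : ℕ} {M : QMat (n + 1)} :
    M ∈ PauliGroup (n + 1) ↔ ∃ g ∈ PauliGroup n,
      (M = blockMat g 0 0 g ∨ M = blockMat g 0 0 (-g)) ∨
        (M = blockMat 0 g g 0 ∨ M = blockMat 0 g (-g) 0) := by
  constructor
  · rintro ⟨α, hα, P, hP, rfl⟩
    have htail : ∀ j, Fin.tail P j = 1 ∨ Fin.tail P j = pX ∨ Fin.tail P j = pY ∨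
        Fin.tail P j = pZ := fun j => hP j.succ
    have hg : α • kron (Fin.tail P) ∈ PauliGroup n := ⟨α, hα, _, htail, rfl⟩
    rw [← Fin.cons_self_tail P, kron_cons]
    rcases hP 0 with h | h | h | h <;> rw [h]
    · exact ⟨_, hg, Or.inl <| Or.inl <| by simp [smul_blockMat]⟩
    · exact ⟨_, hg, Or.inr <| Or.inl <| by simp [smul_blockMat, pX]⟩
    · refine ⟨_, smul_mem_pauliGroup (α := -Complex.I) (by simp) hg, Or.inr <| Or.inr ?_⟩
      simp [smul_blockMat, pY, smul_comm α]
    · exact ⟨_, hg, Or.inl <| Or.inr <| by simp [smul_blockMat, pZ]⟩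
  · rintro ⟨_, ⟨α, hα, P, hP, rfl⟩, h⟩
    have build (β : ℂ) (hβ : β = 1 ∨ β = -1 ∨ β = Complex.I ∨ β = -Complex.I)
        (Q : Matrix (Fin 2) (Fin 2) ℂ) (hQ : Q = 1 ∨ Q = pX ∨ Q = pY ∨ Q = pZ) :
        β • α • kron (Fin.cons Q P : Fin (n + 1) → Matrix (Fin 2) (Fin 2) ℂ) ∈
          PauliGroup (n + 1) :=
      smul_mem_pauliGroup hβ ⟨α, hα, _, Fin.forall_fin_succ.2 ⟨hQ, hP⟩, rfl⟩
    rcases h with (rfl | rfl) | (rfl | rfl)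
    · convert build 1 (by simp) 1 (by simp) using 1
      simp [kron_cons, smul_blockMat]
    · convert build 1 (by simp) pZ (by simp) using 1
      simp [kron_cons, smul_blockMat, pZ]
    · convert build 1 (by simp) pX (by simp) using 1
      simp [kron_cons, smul_blockMat, pX]
    · convert build Complex.I (by simp) pY (by simp) using 1
      simp [kron_cons, smul_blockMat, pY, smul_smul, mul_left_comm Complex.I]

theorem one_mem_pauliGroup (n : ℕ) : (1 : QMat n) ∈ PauliGroup n := by
  induction n with
  | zero => simp [mem_pauliGroup_zero]
  | succ n ih => exact mem_pauliGroup_succ.2 ⟨1, ih, by simp [blockMat_one]⟩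

theorem mul_mem_pauliGroup {n : ℕ} {g h : QMat n} (hg : g ∈ PauliGroup n)
    (hh : h ∈ PauliGroup n) : g * h ∈ PauliGroup n := by
  induction n with
  | zero =>
    rw [mem_pauliGroup_zero] at hg hh ⊢
    rcases hg with rfl | rfl | rfl | rfl <;> rcases hh with rfl | rfl | rfl | rfl <;>
      simp [smul_smul]
  | succ n ih =>
    obtain ⟨g, hg', H⟩ := mem_pauliGroup_succ.1 hg
    obtain ⟨h, hh', H'⟩ := mem_pauliGroup_succ.1 hh
    rcases H with (rfl | rfl) | (rfl | rfl) <;> rcases H' with (rfl | rfl) | (rfl | rfl) <;>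
      first
      | refine mem_pauliGroup_succ.2 ⟨g * h, ih hg' hh', ?_⟩
        simp [blockMat_mul, blockMat_inj]
        done
      | refine mem_pauliGroup_succ.2 ⟨-(g * h), neg_mem_pauliGroup (ih hg' hh'), ?_⟩
        simp [blockMat_mul, blockMat_inj]

theorem mul_self_pauliGroup {n : ℕ} {g : QMat n} (hg : g ∈ PauliGroup n) :
    g * g = 1 ∨ g * g = -1 := by
  induction n with
  | zero =>
    rcases mem_pauliGroup_zero.1 hg with rfl | rfl | rfl | rfl <;> simp [smul_smul]
  | succ n ih =>
    obtain ⟨g, hg', H⟩ := mem_pauliGroup_succ.1 hg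
    rw [← blockMat_one, neg_blockMat]
    rcases H with (rfl | rfl) | (rfl | rfl) <;> rcases ih hg' with h | h <;>
      simp [blockMat_mul, blockMat_inj, h]

theorem commute_or_anticommute_pauliGroup {n : ℕ} {g h : QMat n} (hg : g ∈ PauliGroup n)
    (hh : h ∈ PauliGroup n) : g * h = h * g ∨ g * h = -(h * g) := by
  induction n with
  | zero =>
    rw [mem_pauliGroup_zero] at hg hh
    rcases hg with rfl | rfl | rfl | rfl <;> simp
  | succ n ih =>
    obtain ⟨g, hg', H⟩ := mem_pauliGroup_succ.1 hg
    obtain ⟨h, hh', H'⟩ := mem_pauliGroup_succ.1 hh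
    rcases H with (rfl | rfl) | (rfl | rfl) <;> rcases H' with (rfl | rfl) | (rfl | rfl) <;>
      rcases ih hg' hh' with e | e <;> simp [blockMat_mul, neg_blockMat, blockMat_inj, e]

theorem exists_inverse_pauliGroup {n : ℕ} {g : QMat n} (hg : g ∈ PauliGroup n) :
    ∃ h ∈ PauliGroup n, (h = g ∨ h = -g) ∧ g * h = 1 ∧ h * g = 1 := by
  rcases mul_self_pauliGroup hg with h | h
  · exact ⟨g, hg, by simp, h, h⟩
  · exact ⟨-g, neg_mem_pauliGroup hg, by simp, by simp [h], by simp [h]⟩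

theorem ne_zero_of_mem_pauliGroup {n : ℕ} {g : QMat n} (hg : g ∈ PauliGroup n) : g ≠ 0 := by
  rintro rfl
  rcases mul_self_pauliGroup hg with h | h <;> simp at h

theorem ne_neg_of_mem_pauliGroup {n : ℕ} {g : QMat n} (hg : g ∈ PauliGroup n) : g ≠ -g :=
  fun h => ne_zero_of_mem_pauliGroup hg
    (Matrix.ext fun i j => self_eq_neg.1 (congrFun₂ h i j))

theorem mulVec_ne_zero_of_mem_pauliGroup {n : ℕ} {g : QMat n} (hg : g ∈ PauliGroup n)
    {a : (Fin n → Fin 2) → ℂ} (ha : a ≠ 0) : g *ᵥ a ≠ 0 := by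
  obtain ⟨h, -, -, -, hgh⟩ := exists_inverse_pauliGroup hg
  intro h0
  apply ha
  rw [← one_mulVec a, ← hgh, ← mulVec_mulVec, h0, mulVec_zero]

theorem pauliGroup_succ_eq (n : ℕ) :
    PauliGroup (n + 1) =
      ((fun g => blockMat g 0 0 g) '' PauliGroup n ∪
        (fun g => blockMat g 0 0 (-g)) '' PauliGroup n) ∪
      ((fun g => blockMat 0 g g 0) '' PauliGroup n ∪
        (fun g => blockMat 0 g (-g) 0) '' PauliGroup n) := by
  ext M
  rw [mem_pauliGroup_succ]
  simp only [Set.mem_union, Set.mem_image]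
  grind

theorem finite_pauliGroup (n : ℕ) : (PauliGroup n).Finite := by
  induction n with
  | zero =>
    refine Set.Finite.subset
      (Set.toFinite {1, -1, Complex.I • 1, -Complex.I • 1}) fun M hM => ?_
    simpa using mem_pauliGroup_zero.1 hM
  | succ n ih =>
    rw [pauliGroup_succ_eq]
    exact ((ih.image _).union (ih.image _)).union ((ih.image _).union (ih.image _))

theorem ncard_pauliGroup (n : ℕ) : (PauliGroup n).ncard = 4 ^ (n + 1) := by
  induction n with
  | zero =>
    have h : PauliGroup 0 = (fun α : ℂ => α • (1 : QMat 0)) ''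
        (({1, -1, Complex.I, -Complex.I} : Finset ℂ) : Set ℂ) := by
      ext M
      simp [mem_pauliGroup_zero, eq_comm]
    rw [h, Set.ncard_image_of_injective, Set.ncard_coe_finset]
    · norm_num [Finset.card_insert_of_notMem, Complex.ext_iff]
    · exact smul_left_injective ℂ one_ne_zero
  | succ n ih =>
    have fin (f : QMat n → QMat (n + 1)) : (f '' PauliGroup n).Finite :=
      (finite_pauliGroup n).image f
    rw [pauliGroup_succ_eq, Set.ncard_union_eq _ ((fin _).union (fin _)) ((fin _).union (fin _)),
      Set.ncard_union_eq _ (fin _) (fin _), Set.ncard_union_eq _ (fin _) (fin _),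
      Set.ncard_image_of_injective, Set.ncard_image_of_injective,
      Set.ncard_image_of_injective, Set.ncard_image_of_injective, ih]
    · ring
    all_goals
      first
      | intro g h
        simp only [blockMat_inj]
        tauto
      | rw [Set.disjoint_left]
        simp only [Set.mem_union, Set.mem_image]
        grind [blockMat_inj, ne_zero_of_mem_pauliGroup, ne_neg_of_mem_pauliGroup]

/-- The Pauli operators that fix the vector `ψ`. -/
def pauliStabilizer {n : ℕ} (ψ : (Fin n → Fin 2) → ℂ) : Set (QMat n) :=
  {P | P ∈ PauliGroup n ∧ P *ᵥ ψ = ψ}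

/-- The top left blocks of the block diagonal Pauli operators that fix `joinVec a b`. -/
def diagBlocks {n : ℕ} (a b : (Fin n → Fin 2) → ℂ) : Set (QMat n) :=
  {g | g ∈ PauliGroup n ∧ g *ᵥ a = a ∧ (g *ᵥ b = b ∨ g *ᵥ b = -b)}

/-- The top right blocks of the block antidiagonal Pauli operators that fix `joinVec a b`. -/
def antidiagBlocks {n : ℕ} (a b : (Fin n → Fin 2) → ℂ) : Set (QMat n) :=
  {g | g ∈ PauliGroup n ∧ g *ᵥ b = a ∧ (g *ᵥ a = b ∨ g *ᵥ a = -b)}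

section Stabilizer

variable {n : ℕ} {a b : (Fin n → Fin 2) → ℂ}

theorem finite_pauliStabilizer (a : (Fin n → Fin 2) → ℂ) : (pauliStabilizer a).Finite :=
  (finite_pauliGroup n).subset fun _ h => h.1

theorem ncard_pauliStabilizer_joinVec_zero (ha : a ≠ 0) :
    (pauliStabilizer (joinVec a 0)).ncard = 2 * (pauliStabilizer a).ncard := by
  have fin (f : QMat n → QMat (n + 1)) : (f '' pauliStabilizer a).Finite :=
    (finite_pauliStabilizer a).image f
  have h : pauliStabilizer (joinVec a 0) =
      (fun g => blockMat g 0 0 g) '' pauliStabilizer a ∪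
        (fun g => blockMat g 0 0 (-g)) '' pauliStabilizer a := by
    ext M
    simp only [pauliStabilizer, Set.mem_union, Set.mem_image, Set.mem_ofPred_eq,
      mem_pauliGroup_succ]
    constructor
    · rintro ⟨⟨g, hg, (rfl | rfl) | (rfl | rfl)⟩, h⟩ <;>
        simp only [blockMat_mulVec, joinVec_inj, mulVec_zero, zero_mulVec, add_zero] at h
      · exact Or.inl ⟨g, ⟨hg, h.1⟩, rfl⟩
      · exact Or.inr ⟨g, ⟨hg, h.1⟩, rfl⟩
      · exact absurd h.1.symm ha
      · exact absurd h.1.symm ha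
    · rintro (⟨g, ⟨hg, h⟩, rfl⟩ | ⟨g, ⟨hg, h⟩, rfl⟩)
      · exact ⟨⟨g, hg, by simp⟩, by simp [blockMat_mulVec, h]⟩
      · exact ⟨⟨g, hg, by simp⟩, by simp [blockMat_mulVec, h]⟩
  rw [h, Set.ncard_union_eq _ (fin _) (fin _), Set.ncard_image_of_injective,
    Set.ncard_image_of_injective, two_mul]
  · intro g g'
    simp only [blockMat_inj]
    tauto
  · intro g g'
    simp only [blockMat_inj]
    tauto
  · rw [Set.disjoint_left]
    rintro _ ⟨g, hg, rfl⟩ ⟨g', hg', h⟩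
    obtain ⟨rfl, -, -, h⟩ := blockMat_inj.1 h
    exact ne_neg_of_mem_pauliGroup hg.1 h.symm

theorem ncard_pauliStabilizer_zero_joinVec (hb : b ≠ 0) :
    (pauliStabilizer (joinVec 0 b)).ncard = 2 * (pauliStabilizer b).ncard := by
  have fin (f : QMat n → QMat (n + 1)) : (f '' pauliStabilizer b).Finite :=
    (finite_pauliStabilizer b).image f
  have h : pauliStabilizer (joinVec 0 b) =
      (fun g => blockMat g 0 0 g) '' pauliStabilizer b ∪
        (fun g => blockMat (-g) 0 0 g) '' pauliStabilizer b := by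
    ext M
    simp only [pauliStabilizer, Set.mem_union, Set.mem_image, Set.mem_ofPred_eq,
      mem_pauliGroup_succ]
    constructor
    · rintro ⟨⟨g, hg, (rfl | rfl) | (rfl | rfl)⟩, h⟩ <;>
        simp only [blockMat_mulVec, joinVec_inj, mulVec_zero, zero_mulVec, add_zero,
          zero_add] at h
      · exact Or.inl ⟨g, ⟨hg, h.2⟩, rfl⟩
      · exact Or.inr ⟨-g, ⟨neg_mem_pauliGroup hg, h.2⟩, by simp⟩
      · exact absurd h.2.symm hb
      · exact absurd h.2.symm hb
    · rintro (⟨g, ⟨hg, h⟩, rfl⟩ | ⟨g, ⟨hg, h⟩, rfl⟩)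
      · exact ⟨⟨g, hg, by simp⟩, by simp [blockMat_mulVec, h]⟩
      · exact ⟨⟨-g, neg_mem_pauliGroup hg, by simp⟩, by simp [blockMat_mulVec, h]⟩
  rw [h, Set.ncard_union_eq _ (fin _) (fin _), Set.ncard_image_of_injective,
    Set.ncard_image_of_injective, two_mul]
  · intro g g'
    simp only [blockMat_inj]
    tauto
  · intro g g'
    simp only [blockMat_inj]
    tauto
  · rw [Set.disjoint_left]
    rintro _ ⟨g, hg, rfl⟩ ⟨g', hg', h⟩
    obtain ⟨h, -, -, rfl⟩ := blockMat_inj.1 h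
    exact ne_neg_of_mem_pauliGroup hg.1 h.symm

open Classical in
theorem ncard_pauliStabilizer_joinVec (hb : b ≠ 0) :
    (pauliStabilizer (joinVec a b)).ncard =
      (diagBlocks a b).ncard + (antidiagBlocks a b).ncard := by
  have hbb : -b ≠ b := fun h => hb (funext fun i => neg_eq_self.1 (congrFun h i))
  have h : pauliStabilizer (joinVec a b) =
      (fun g => blockMat g 0 0 (if g *ᵥ b = b then g else -g)) '' diagBlocks a b ∪
        (fun g => blockMat 0 g (if g *ᵥ a = b then g else -g) 0) '' antidiagBlocks a b := by
    ext M
    simp only [pauliStabilizer, diagBlocks, antidiagBlocks, Set.mem_union, Set.mem_image,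
      Set.mem_ofPred_eq, mem_pauliGroup_succ]
    constructor
    · rintro ⟨⟨g, hg, (rfl | rfl) | (rfl | rfl)⟩, h⟩ <;>
        simp only [blockMat_mulVec, joinVec_inj, zero_mulVec, add_zero, zero_add,
          neg_mulVec, neg_eq_iff_eq_neg] at h
      · exact Or.inl ⟨g, ⟨hg, h.1, Or.inl h.2⟩, by simp [h.2]⟩
      · exact Or.inl ⟨g, ⟨hg, h.1, Or.inr h.2⟩, by simp [h.2, hbb]⟩
      · exact Or.inr ⟨g, ⟨hg, h.1, Or.inl h.2⟩, by simp [h.2]⟩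
      · exact Or.inr ⟨g, ⟨hg, h.1, Or.inr h.2⟩, by simp [h.2, hbb]⟩
    · rintro (⟨g, ⟨hg, h, h' | h'⟩, rfl⟩ | ⟨g, ⟨hg, h, h' | h'⟩, rfl⟩)
      · exact ⟨⟨g, hg, by simp [h']⟩, by simp [blockMat_mulVec, h, h']⟩
      · exact ⟨⟨g, hg, by simp [h', hbb]⟩, by simp [blockMat_mulVec, h, h', hbb, neg_mulVec]⟩
      · exact ⟨⟨g, hg, by simp [h']⟩, by simp [blockMat_mulVec, h, h']⟩
      · exact ⟨⟨g, hg, by simp [h', hbb]⟩, by simp [blockMat_mulVec, h, h', hbb, neg_mulVec]⟩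
  have findiag : (diagBlocks a b).Finite := (finite_pauliGroup n).subset fun _ h => h.1
  have finanti : (antidiagBlocks a b).Finite := (finite_pauliGroup n).subset fun _ h => h.1
  rw [h, Set.ncard_union_eq _ (findiag.image _) (finanti.image _),
    Set.ncard_image_of_injective, Set.ncard_image_of_injective]
  · intro g g'
    simp only [blockMat_inj]
    tauto
  · intro g g'
    simp only [blockMat_inj]
    tauto
  · rw [Set.disjoint_left]
    rintro _ ⟨g, hg, rfl⟩ ⟨g', hg', h⟩
    exact ne_zero_of_mem_pauliGroup hg.1 (blockMat_inj.1 h).1.symm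

theorem ncard_diagBlocks_le (a b : (Fin n → Fin 2) → ℂ) :
    (diagBlocks a b).ncard ≤ (pauliStabilizer a).ncard :=
  Set.ncard_le_ncard (fun _ h => ⟨h.1, h.2.1⟩) (finite_pauliStabilizer a)

theorem ncard_antidiagBlocks_le (a b : (Fin n → Fin 2) → ℂ) :
    (antidiagBlocks a b).ncard ≤ (pauliStabilizer a).ncard := by
  rcases (antidiagBlocks a b).eq_empty_or_nonempty with h | ⟨q, hq, hqb, -⟩
  · simp [h]
  obtain ⟨r, hr, -, hqr, hrq⟩ := exists_inverse_pauliGroup hq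
  refine Set.ncard_le_ncard_of_injOn (· * r) ?_ ?_ (finite_pauliStabilizer a)
  · rintro g ⟨hg, hgb, -⟩
    refine ⟨mul_mem_pauliGroup hg hr, ?_⟩
    rw [← mulVec_mulVec]
    nth_rw 1 [← hqb]
    rw [mulVec_mulVec b, hrq, one_mulVec, hgb]
  · intro g _ g' _ h
    simpa [mul_assoc, hrq] using congrArg (· * q) h

theorem ncard_pauliStabilizer_le (ha : a ≠ 0) : (pauliStabilizer a).ncard ≤ 2 ^ n := by
  induction n with
  | zero =>
    have h : pauliStabilizer a ⊆ {1} := by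
      rintro g ⟨hg, hga⟩
      obtain ⟨i, hi⟩ := Function.ne_iff.1 ha
      have := congrFun hga i
      rcases mem_pauliGroup_zero.1 hg with rfl | rfl | rfl | rfl
      · rfl
      all_goals
        simp only [neg_mulVec, smul_mulVec, one_mulVec, Pi.smul_apply, Pi.neg_apply,
          smul_eq_mul] at this
        first
        | rw [neg_eq_self] at this
          exact absurd this hi
        | rw [mul_eq_right₀ hi] at this
          norm_num [Complex.ext_iff] at this
    simpa using Set.ncard_le_ncard h
  | succ n ih =>
    obtain ⟨a, b, rfl⟩ := exists_eq_joinVec a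
    rw [pow_succ]
    rcases eq_or_ne b 0 with rfl | hb
    · have ha' : a ≠ 0 := by
        rintro rfl
        exact ha joinVec_zero
      have := ih ha'
      rw [ncard_pauliStabilizer_joinVec_zero ha']
      lia
    rcases eq_or_ne a 0 with rfl | ha'
    · have := ih hb
      rw [ncard_pauliStabilizer_zero_joinVec hb]
      lia
    have h := ih ha'
    have h₁ := ncard_diagBlocks_le a b
    have h₂ := ncard_antidiagBlocks_le a b
    rw [ncard_pauliStabilizer_joinVec hb]
    lia

/-- For `a` and `b` nonzero, `joinVec a b` has a Pauli stabilizer of maximal order exactly when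
`a` has one and `b` lies in the Pauli orbit of `a`. -/
theorem ncard_pauliStabilizer_joinVec_eq_iff (ha : a ≠ 0) (hb : b ≠ 0) :
    (pauliStabilizer (joinVec a b)).ncard = 2 ^ (n + 1) ↔
      (pauliStabilizer a).ncard = 2 ^ n ∧ ∃ q ∈ PauliGroup n, q *ᵥ a = b := by
  have hle := ncard_pauliStabilizer_le ha
  have h₁ := ncard_diagBlocks_le a b
  have h₂ := ncard_antidiagBlocks_le a b
  rw [ncard_pauliStabilizer_joinVec hb, pow_succ]
  constructor
  · intro h
    have hpos := Nat.pow_pos (n := n) (show 0 < 2 by norm_num)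
    obtain ⟨q, hq, -, hqa | hqa⟩ :=
      Set.nonempty_of_ncard_ne_zero (s := antidiagBlocks a b) (by lia)
    · exact ⟨by lia, q, hq, hqa⟩
    · exact ⟨by lia, -q, neg_mem_pauliGroup hq, by simp [neg_mulVec, hqa]⟩
  · rintro ⟨h, q, hq, rfl⟩
    obtain ⟨r, hr, hrq, -, hrq'⟩ := exists_inverse_pauliGroup hq
    have h₃ : (pauliStabilizer a).ncard ≤ (diagBlocks a (q *ᵥ a)).ncard := by
      refine Set.ncard_le_ncard ?_ ((finite_pauliGroup n).subset fun _ h => h.1)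
      rintro g ⟨hg, hga⟩
      refine ⟨hg, hga, ?_⟩
      rw [mulVec_mulVec]
      rcases commute_or_anticommute_pauliGroup hg hq with e | e <;>
        simp [e, neg_mulVec, ← mulVec_mulVec, hga]
    have h₄ : (pauliStabilizer a).ncard ≤ (antidiagBlocks a (q *ᵥ a)).ncard := by
      refine Set.ncard_le_ncard_of_injOn (· * r) ?_ ?_
        ((finite_pauliGroup n).subset fun _ h => h.1)
      · rintro g ⟨hg, hga⟩
        refine ⟨mul_mem_pauliGroup hg hr, by simp [mul_assoc, hrq', hga], ?_⟩
        rcases commute_or_anticommute_pauliGroup hg hr with e | e <;>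
          rcases hrq with rfl | rfl <;>
          simp [e, neg_mulVec, ← mulVec_mulVec, hga]
      · intro g _ g' _ h
        simpa [mul_assoc, hrq'] using congrArg (· * q) h
    lia

end Stabilizer

open Classical in
/-- The orbit of a vector under the Pauli group. -/
def pauliOrbit {n : ℕ} (a : (Fin n → Fin 2) → ℂ) : Finset ((Fin n → Fin 2) → ℂ) :=
  (finite_pauliGroup n).toFinset.image (· *ᵥ a)

theorem mem_pauliOrbit {n : ℕ} {a b : (Fin n → Fin 2) → ℂ} :
    b ∈ pauliOrbit a ↔ ∃ g ∈ PauliGroup n, g *ᵥ a = b := by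
  simp [pauliOrbit]

theorem card_pauliOrbit_mul {n : ℕ} (a : (Fin n → Fin 2) → ℂ) :
    (pauliOrbit a).card * (pauliStabilizer a).ncard = 4 ^ (n + 1) := by
  classical
  rw [← ncard_pauliGroup, Set.ncard_eq_toFinset_card _ (finite_pauliGroup n),
    Finset.card_eq_sum_card_image (· *ᵥ a), ← smul_eq_mul, ← Finset.sum_const]
  refine Finset.sum_congr rfl fun b hb => ?_
  obtain ⟨q, hq, rfl⟩ := mem_pauliOrbit.1 hb
  obtain ⟨r, hr, -, hqr, hrq⟩ := exists_inverse_pauliGroup hq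
  rw [← Set.ncard_coe_finset]
  refine Set.ncard_congr (fun g _ => q * g) ?_ ?_ ?_
  · rintro g ⟨hg, hga⟩
    simp [mul_mem_pauliGroup hq hg, ← mulVec_mulVec, hga]
  · intro g g' _ _ h
    simpa [← mul_assoc, hrq] using congrArg (r * ·) h
  · intro g hg
    simp only [Finset.coe_filter, Set.Finite.mem_toFinset, Set.mem_ofPred_eq] at hg
    refine ⟨r * g, ⟨mul_mem_pauliGroup hr hg.1, ?_⟩, by simp [← mul_assoc, hqr]⟩
    rw [← mulVec_mulVec, hg.2, mulVec_mulVec, hrq, one_mulVec]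

open Classical in
/-- One vector on each line that is an `n`-qubit stabilizer state, normalized so that its first
nonzero coordinate is `1`. -/
def stabilizerVectors : (n : ℕ) → Finset ((Fin n → Fin 2) → ℂ)
  | 0 => {1}
  | n + 1 =>
    (stabilizerVectors n).image (joinVec · 0) ∪ (stabilizerVectors n).image (joinVec 0) ∪
      (stabilizerVectors n).biUnion fun a => (pauliOrbit a).image (joinVec a)

theorem mem_stabilizerVectors_succ {n : ℕ} {ψ : (Fin (n + 1) → Fin 2) → ℂ} :
    ψ ∈ stabilizerVectors (n + 1) ↔
      (∃ a ∈ stabilizerVectors n, joinVec a 0 = ψ) ∨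
      (∃ a ∈ stabilizerVectors n, joinVec 0 a = ψ) ∨
      ∃ a ∈ stabilizerVectors n, ∃ b ∈ pauliOrbit a, joinVec a b = ψ := by
  simp [stabilizerVectors]

theorem ne_zero_of_mem_stabilizerVectors {n : ℕ} {ψ : (Fin n → Fin 2) → ℂ}
    (hψ : ψ ∈ stabilizerVectors n) : ψ ≠ 0 := by
  induction n with
  | zero =>
    obtain rfl : ψ = 1 := by simpa [stabilizerVectors] using hψ
    exact one_ne_zero
  | succ n ih =>
    rw [← joinVec_zero]
    rcases mem_stabilizerVectors_succ.1 hψ with ⟨a, ha, rfl⟩ | ⟨a, ha, rfl⟩ | ⟨a, ha, b, -, rfl⟩ <;>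
      simp [joinVec_inj, ih ha]

theorem ne_zero_of_mem_pauliOrbit {n : ℕ} {a b : (Fin n → Fin 2) → ℂ} (ha : a ≠ 0)
    (hb : b ∈ pauliOrbit a) : b ≠ 0 := by
  obtain ⟨g, hg, rfl⟩ := mem_pauliOrbit.1 hb
  exact mulVec_ne_zero_of_mem_pauliGroup hg ha

theorem ncard_pauliStabilizer_of_mem_stabilizerVectors {n : ℕ} {ψ : (Fin n → Fin 2) → ℂ}
    (hψ : ψ ∈ stabilizerVectors n) : (pauliStabilizer ψ).ncard = 2 ^ n := by
  induction n with
  | zero =>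
    refine le_antisymm (ncard_pauliStabilizer_le (ne_zero_of_mem_stabilizerVectors hψ)) ?_
    have hne : (pauliStabilizer ψ).Nonempty := ⟨1, one_mem_pauliGroup 0, one_mulVec ψ⟩
    exact (Set.ncard_pos (finite_pauliStabilizer ψ)).2 hne
  | succ n ih =>
    rcases mem_stabilizerVectors_succ.1 hψ with ⟨a, ha, rfl⟩ | ⟨a, ha, rfl⟩ | ⟨a, ha, b, hb, rfl⟩ <;>
      have ha' := ne_zero_of_mem_stabilizerVectors ha
    · rw [ncard_pauliStabilizer_joinVec_zero ha', ih ha, pow_succ']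
    · rw [ncard_pauliStabilizer_zero_joinVec ha', ih ha, pow_succ']
    · exact (ncard_pauliStabilizer_joinVec_eq_iff ha' (ne_zero_of_mem_pauliOrbit ha' hb)).2
        ⟨ih ha, mem_pauliOrbit.1 hb⟩

theorem eq_one_of_smul_mem_stabilizerVectors {n : ℕ} {c : ℂ} {ψ : (Fin n → Fin 2) → ℂ}
    (hψ : ψ ∈ stabilizerVectors n) (hc : c • ψ ∈ stabilizerVectors n) : c = 1 := by
  induction n with
  | zero =>
    simp only [stabilizerVectors, Finset.mem_singleton] at hψ hc
    simpa [hψ] using congrFun hc 0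
  | succ n ih =>
    rcases mem_stabilizerVectors_succ.1 hψ with ⟨a, ha, rfl⟩ | ⟨a, ha, rfl⟩ | ⟨a, ha, b, hb, rfl⟩ <;>
      have ha' := ne_zero_of_mem_stabilizerVectors ha <;>
      rw [smul_joinVec] at hc <;>
      rcases mem_stabilizerVectors_succ.1 hc with
        ⟨d, hd, h⟩ | ⟨d, hd, h⟩ | ⟨d, hd, e, he, h⟩ <;>
      have hd' := ne_zero_of_mem_stabilizerVectors hd <;>
      obtain ⟨h, h'⟩ := joinVec_inj.1 h
    · exact ih ha (h ▸ hd)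
    · exact absurd (by simpa using h') hd'
    · exact absurd (by simpa using h') (ne_zero_of_mem_pauliOrbit hd' he)
    · exact absurd (by simpa using h) hd'
    · exact ih ha (h' ▸ hd)
    · exact absurd (by simpa using h) hd'
    · exact ih ha (h ▸ hd)
    · obtain rfl : c = 0 := by simpa [ha'] using h.symm
      exact absurd (by simpa using h') hd'
    · exact ih ha (h ▸ hd)

theorem exists_smul_mem_stabilizerVectors {n : ℕ} {ψ : (Fin n → Fin 2) → ℂ} (hψ : ψ ≠ 0)
    (h : (pauliStabilizer ψ).ncard = 2 ^ n) : ∃ c : ℂ, c ≠ 0 ∧ c • ψ ∈ stabilizerVectors n := by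
  induction n with
  | zero =>
    have hne : ψ 0 ≠ 0 := fun h0 => hψ (funext fun x => by rw [Subsingleton.elim x 0, h0]; rfl)
    refine ⟨(ψ 0)⁻¹, inv_ne_zero hne, ?_⟩
    simp only [stabilizerVectors, Finset.mem_singleton]
    ext x
    rw [Subsingleton.elim x 0]
    exact inv_mul_cancel₀ hne
  | succ n ih =>
    obtain ⟨a, b, rfl⟩ := exists_eq_joinVec ψ
    simp only [smul_joinVec, mem_stabilizerVectors_succ]
    rcases eq_or_ne b 0 with rfl | hb
    · have ha : a ≠ 0 := by
        rintro rfl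
        exact hψ joinVec_zero
      rw [ncard_pauliStabilizer_joinVec_zero ha] at h
      obtain ⟨c, hc, hca⟩ := ih ha (by lia)
      exact ⟨c, hc, Or.inl ⟨_, hca, by simp⟩⟩
    rcases eq_or_ne a 0 with rfl | ha
    · rw [ncard_pauliStabilizer_zero_joinVec hb] at h
      obtain ⟨c, hc, hcb⟩ := ih hb (by lia)
      exact ⟨c, hc, Or.inr <| Or.inl ⟨_, hcb, by simp⟩⟩
    obtain ⟨ha', q, hq, rfl⟩ := (ncard_pauliStabilizer_joinVec_eq_iff ha hb).1 h
    obtain ⟨c, hc, hca⟩ := ih ha ha'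
    exact ⟨c, hc, Or.inr <| Or.inr
      ⟨_, hca, _, mem_pauliOrbit.2 ⟨q, hq, mulVec_smul q c a⟩, rfl⟩⟩

theorem card_stabilizerVectors_succ (n : ℕ) :
    (stabilizerVectors (n + 1)).card = 2 * (2 ^ (n + 1) + 1) * (stabilizerVectors n).card := by
  classical
  have orb (a) (ha : a ∈ stabilizerVectors n) : (pauliOrbit a).card = 4 * 2 ^ n := by
    have h := card_pauliOrbit_mul a
    rw [ncard_pauliStabilizer_of_mem_stabilizerVectors ha] at h
    have h4 : (4 : ℕ) ^ (n + 1) = 4 * 2 ^ n * 2 ^ n := by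
      rw [show 4 = 2 * 2 from rfl, pow_succ, mul_pow]
      ring
    exact Nat.eq_of_mul_eq_mul_right (by positivity) (h.trans h4)
  have hne (a) (ha : a ∈ stabilizerVectors n) := ne_zero_of_mem_stabilizerVectors ha
  rw [stabilizerVectors, Finset.card_union_of_disjoint, Finset.card_union_of_disjoint,
    Finset.card_image_of_injective, Finset.card_image_of_injective, Finset.card_biUnion,
    Finset.sum_congr rfl fun a ha => (Finset.card_image_of_injective _ ?_).trans (orb a ha),
    Finset.sum_const, smul_eq_mul]
  · ring
  · exact fun b b' h => (joinVec_inj.1 h).2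
  · intro a _ a' _ haa'
    rw [Function.onFun, Finset.disjoint_left]
    simp only [Finset.mem_image]
    rintro _ ⟨b, -, rfl⟩ ⟨b', -, h⟩
    exact haa' (joinVec_inj.1 h).1.symm
  · exact fun b b' h => (joinVec_inj.1 h).2
  · exact fun b b' h => (joinVec_inj.1 h).1
  · rw [Finset.disjoint_left]
    simp only [Finset.mem_image]
    rintro _ ⟨a, ha, rfl⟩ ⟨b, -, h⟩
    exact hne a ha (joinVec_inj.1 h).1.symm
  · rw [Finset.disjoint_left]
    simp only [Finset.mem_union, Finset.mem_biUnion, Finset.mem_image]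
    rintro _ (⟨a, ha, rfl⟩ | ⟨a, ha, rfl⟩) ⟨d, hd, b, hb, h⟩
    · exact ne_zero_of_mem_pauliOrbit (hne d hd) hb (joinVec_inj.1 h).2
    · exact hne d hd (joinVec_inj.1 h).1

theorem card_stabilizerVectors (n : ℕ) :
    (stabilizerVectors n).card = 2 ^ n * ∏ k ∈ Finset.range n, (2 ^ (n - k) + 1) := by
  induction n with
  | zero => simp [stabilizerVectors]
  | succ n ih =>
    rw [card_stabilizerVectors_succ, ih, Finset.prod_range_succ', Nat.sub_zero]
    simp only [Nat.add_sub_add_right]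
    ring

theorem setOf_stabilizes_span_singleton {n : ℕ} (ψ : (Fin n → Fin 2) → ℂ) :
    {P | P ∈ PauliGroup n ∧ ∀ φ ∈ Submodule.span ℂ {ψ}, P *ᵥ φ = φ} = pauliStabilizer ψ := by
  ext P
  refine and_congr_right fun _ => ⟨fun h => h ψ (Submodule.mem_span_singleton_self ψ), ?_⟩
  rintro h φ hφ
  obtain ⟨c, rfl⟩ := Submodule.mem_span_singleton.1 hφ
  rw [mulVec_smul, h]

/-- The number of `n`-qubit pure stabilizer states (one-dimensional
subspaces of `ℂ^(2^n)` whose Pauli stabilizer has exactly `2^n` elements) equals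
`2^n · ∏_{k=0}^{n-1} (2^(n-k) + 1)`. -/
theorem number_of_stabilizer_states (n : ℕ) :
    {W : Submodule ℂ ((Fin n → Fin 2) → ℂ) |
        Module.finrank ℂ W = 1 ∧
        {P | P ∈ PauliGroup n ∧ ∀ ψ ∈ W, P.mulVec ψ = ψ}.ncard = 2 ^ n}.ncard =
      2 ^ n * ∏ k ∈ Finset.range n, (2 ^ (n - k) + 1) := by
  rw [← card_stabilizerVectors, ← Set.ncard_coe_finset]
  symm
  refine Set.ncard_congr (fun ψ _ => Submodule.span ℂ {ψ}) ?_ ?_ ?_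
  · intro ψ hψ
    refine ⟨finrank_span_singleton (ne_zero_of_mem_stabilizerVectors hψ), ?_⟩
    rw [setOf_stabilizes_span_singleton]
    exact ncard_pauliStabilizer_of_mem_stabilizerVectors hψ
  · intro ψ φ hψ hφ h
    obtain ⟨c, rfl⟩ := Submodule.mem_span_singleton.1
      (h ▸ Submodule.mem_span_singleton_self φ : φ ∈ Submodule.span ℂ {ψ})
    rw [eq_one_of_smul_mem_stabilizerVectors hψ hφ, one_smul]
  · rintro W ⟨hW, hP⟩
    obtain ⟨ψ, hψ, rfl⟩ : ∃ ψ, ψ ≠ 0 ∧ Submodule.span ℂ {ψ} = W := by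
      obtain ⟨⟨ψ, hψW⟩, hψ, hspan⟩ := finrank_eq_one_iff'.1 hW
      refine ⟨ψ, fun h => hψ (Subtype.ext h), le_antisymm (by simpa using hψW) fun φ hφ => ?_⟩
      obtain ⟨c, hc⟩ := hspan ⟨φ, hφ⟩
      exact Submodule.mem_span_singleton.2 ⟨c, congrArg Subtype.val hc⟩
    rw [setOf_stabilizes_span_singleton] at hP
    obtain ⟨c, hc, hcψ⟩ := exists_smul_mem_stabilizerVectors hψ hP
    exact ⟨c • ψ, hcψ, Submodule.span_singleton_smul_eq hc.isUnit ψ⟩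
end
end

section
/- For any symmetric matrix A ∈ GF(2)^{n×n}, there exists a diagonal matrix Λ ∈ GF(2)^{n×n} and an invertible matrix M ∈ GF(2)^{n×n} such that A + Λ = M·Mᵀ; moreover M can be taken to be lower triangular with all diagonal entries equal to 1. -/
open Matrix

noncomputable section

/-- Over a commutative ring, the off-diagonal part of a symmetric matrix agrees with that of
`M * Mᵀ` for some lower unitriangular `M`. -/
theorem exists_lower_unitriangular_mul_transpose_offDiag {R : Type*} [CommRing R] :
    ∀ (n : ℕ) (A : Matrix (Fin n) (Fin n) R), Aᵀ = A →
      ∃ M : Matrix (Fin n) (Fin n) R, (∀ i, M i i = 1) ∧ (∀ i j, i < j → M i j = 0) ∧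
        ∀ i j, i ≠ j → (M * Mᵀ) i j = A i j
  | 0, _, _ => ⟨1, fun i => i.elim0, fun i => i.elim0, fun i => i.elim0⟩
  | n + 1, A, hA => by
    have hsymm : ∀ i j, A i j = A j i := fun i j => (congrFun (congrFun hA j) i)
    -- Peel off the first row and column and factor the Schur complement of the pivot `1`.
    obtain ⟨M, hdiag, hupper, hM⟩ := exists_lower_unitriangular_mul_transpose_offDiag n
      (Matrix.of fun i j : Fin n => A i.succ j.succ - A i.succ 0 * A j.succ 0)
      (by ext i j; simp [hsymm j.succ i.succ, mul_comm])
    refine ⟨Matrix.of (Fin.cons (Fin.cons 1 0) fun i => Fin.cons (A i.succ 0) (M i)), ?_, ?_, ?_⟩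
    · intro i
      cases i using Fin.cases <;> simp [hdiag]
    · intro i j hij
      cases j using Fin.cases with
      | zero => simp at hij
      | succ j =>
        cases i using Fin.cases with
        | zero => simp
        | succ i => simpa using hupper i j (Fin.succ_lt_succ_iff.mp hij)
    · intro i j hij
      cases i using Fin.cases with
      | zero =>
        cases j using Fin.cases with
        | zero => exact absurd rfl hij
        | succ j => simp [Matrix.mul_apply, Fin.sum_univ_succ, hsymm 0 j.succ]
      | succ i =>
        cases j using Fin.cases with
        | zero => simp [Matrix.mul_apply, Fin.sum_univ_succ]
        | succ j =>
          have h := hM i j fun h => hij (congrArg Fin.succ h)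
          simp only [Matrix.mul_apply, Matrix.transpose_apply, Matrix.of_apply] at h
          simp [Matrix.mul_apply, Fin.sum_univ_succ, h]

/-- for any symmetric matrix `A` over `GF(2)` there are a diagonal
`Λ` and an invertible `M` (which may be taken lower unitriangular) with `A + Λ = M·Mᵀ`. -/
theorem symmetric_gf2_factorization (n : ℕ) (A : Matrix (Fin n) (Fin n) (ZMod 2))
    (hA : Aᵀ = A) :
    ∃ Λ M : Matrix (Fin n) (Fin n) (ZMod 2),
      (∀ i j, i ≠ j → Λ i j = 0) ∧
      (∀ i, M i i = 1) ∧ (∀ i j, i < j → M i j = 0) ∧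
      IsUnit M ∧ A + Λ = M * Mᵀ := by
  obtain ⟨M, hdiag, hupper, hM⟩ := exists_lower_unitriangular_mul_transpose_offDiag n A hA
  refine ⟨M * Mᵀ - A, M, fun i j hij => ?_, hdiag, hupper, ?_, by abel⟩
  · rw [Matrix.sub_apply, hM i j hij, sub_self]
  · rw [Matrix.isUnit_iff_isUnit_det,
      Matrix.det_of_isLowerTriangular M fun i j hij => hupper i j hij]
    simp [hdiag]
end
end

section
/- For any symmetric matrix A ∈ GF(2)^{n×n}, there is a unique lower unitriangular matrix M ∈ GF(2)^{n×n} such that A_{ij} = (M·Mᵀ)_{ij} for all pairs (i, j) with i ≠ j (equivalently, such that A + Λ = M·Mᵀ for some diagonal matrix Λ). -/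
open Matrix

noncomputable section

/-- The Gram matrix of the rows of a lower unitriangular matrix. -/
theorem mul_transpose_apply_of_unitriangular {n : ℕ} {R : Type*} [CommRing R]
    {M : Matrix (Fin n) (Fin n) R} (hdiag : ∀ i, M i i = 1)
    (hlow : ∀ i j, i < j → M i j = 0) (i j : Fin n) :
    (M * Mᵀ) i j = ∑ k ∈ Finset.Iio j, M i k * M j k + M i j := by
  rw [Matrix.mul_apply, ← Finset.sum_subset (Finset.subset_univ (Finset.Iic j)),
    ← Finset.Iio_insert, Finset.sum_insert (by simp), add_comm]
  · simp [hdiag]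
  · intro k _ hk
    simp [hlow j k (by simpa using hk)]

/-- The lower unitriangular matrix `M` for which `M * Mᵀ` agrees with `A` below the diagonal,
computed column by column. -/
def unitriangularFactor {n : ℕ} {R : Type*} [CommRing R] (A : Matrix (Fin n) (Fin n) R)
    (i j : Fin n) : R :=
  if i < j then 0
  else if i = j then 1
  else A i j - ∑ k : {k // k < j}, unitriangularFactor A i k * unitriangularFactor A j k
termination_by j
decreasing_by all_goals exact k.2

theorem unitriangularFactor_of_gt {n : ℕ} {R : Type*} [CommRing R]
    (A : Matrix (Fin n) (Fin n) R) {i j : Fin n} (h : j < i) :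
    unitriangularFactor A i j =
      A i j - ∑ k ∈ Finset.Iio j, unitriangularFactor A i k * unitriangularFactor A j k := by
  rw [unitriangularFactor, if_neg h.not_gt, if_neg h.ne',
    Finset.sum_subtype (Finset.Iio j) (p := (· < j)) (by simp)]

/-- for any symmetric matrix `A` over `GF(2)` there is a *unique*
lower unitriangular `M` with `A_{ij} = (M·Mᵀ)_{ij}` for all `i ≠ j`. -/
theorem symmetric_gf2_factorization_unique (n : ℕ) (A : Matrix (Fin n) (Fin n) (ZMod 2))
    (hA : Aᵀ = A) :
    ∃! M : Matrix (Fin n) (Fin n) (ZMod 2),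
      (∀ i, M i i = 1) ∧ (∀ i j, i < j → M i j = 0) ∧
      ∀ i j, i ≠ j → A i j = (M * Mᵀ) i j := by
  have of_gt : ∀ M : Matrix (Fin n) (Fin n) (ZMod 2),
      (∀ i j, j < i → A i j = (M * Mᵀ) i j) → ∀ i j, i ≠ j → A i j = (M * Mᵀ) i j := by
    intro M hM i j hij
    rcases hij.lt_or_gt with h | h
    · rw [← hA, transpose_apply, hM j i h, ← transpose_apply (M * Mᵀ), transpose_mul,
        transpose_transpose]
    · exact hM i j h
  have diag : ∀ i, unitriangularFactor A i i = 1 := fun i => by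
    rw [unitriangularFactor]; simp
  have low : ∀ i j, i < j → unitriangularFactor A i j = 0 := fun i j h => by
    rw [unitriangularFactor, if_pos h]
  refine ⟨Matrix.of (unitriangularFactor A), ⟨diag, low, of_gt _ fun i j h => ?_⟩, ?_⟩
  · rw [mul_transpose_apply_of_unitriangular (M := Matrix.of (unitriangularFactor A)) diag low]
    simp only [Matrix.of_apply]
    rw [unitriangularFactor_of_gt A h, add_sub_cancel]
  · rintro M ⟨hdiag, hlow, hM⟩
    have key : ∀ j i, M i j = unitriangularFactor A i j := by
      intro j
      induction j using WellFoundedLT.induction with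
      | ind j ih =>
        intro i
        rcases lt_trichotomy i j with h | rfl | h
        · rw [hlow i j h, low i j h]
        · rw [hdiag, diag]
        · rw [unitriangularFactor_of_gt A h, hM i j h.ne',
            mul_transpose_apply_of_unitriangular hdiag hlow,
            Finset.sum_congr rfl fun k hk => by
              rw [ih k (Finset.mem_Iio.mp hk) i, ih k (Finset.mem_Iio.mp hk) j],
            add_sub_cancel_left]
    ext i j
    exact key j i
end
end

section
/- Any tableau satisfying the commutativity conditions is generated by some unitary stabilizer circuit: let R₁,…,R_{2n} be elements of P_n, each with phase ±1 (i.e., each of the form ±P₁⊗⋯⊗Pₙ), such that R_i and R_j commute for all i ≠ j except that R_i anticommutes with R_{i+n} for each i ∈ {1,…,n}. Then there exists an element U of the n-qubit Clifford group such that U X_a U⁻¹ = R_a and U Z_a U⁻¹ = R_{n+a} for all a ∈ {1,…,n}, where X_a (resp. Z_a) denotes the element of P_n acting as X (resp. Z) on qubit a and as the identity on all other qubits. -/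
open Matrix

noncomputable section

section CliffordTableau

variable {n : ℕ}

/-! ### Kronecker products of one-qubit matrices -/

theorem kron_mul (P Q : Fin n → Matrix (Fin 2) (Fin 2) ℂ) :
    kron P * kron Q = kron (fun j => P j * Q j) := by
  ext x y
  simp only [kron, Matrix.mul_apply, Matrix.of_apply, ← Finset.prod_mul_distrib]
  rw [Finset.prod_univ_sum, Fintype.piFinset_univ]

theorem kron_one : kron (1 : Fin n → Matrix (Fin 2) (Fin 2) ℂ) = 1 := by
  ext x y
  simp only [kron, Matrix.of_apply, Pi.one_apply, Matrix.one_apply, Finset.prod_ite_zero,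
    Finset.prod_const_one, Finset.mem_univ, true_implies, funext_iff]

theorem kron_smul (c : Fin n → ℂ) (P : Fin n → Matrix (Fin 2) (Fin 2) ℂ) :
    kron (fun j => c j • P j) = (∏ j, c j) • kron P := by
  ext x y
  simp [kron, Finset.prod_mul_distrib]

theorem kron_update_apply (Q : Fin n → Matrix (Fin 2) (Fin 2) ℂ) (a : Fin n)
    (M : Matrix (Fin 2) (Fin 2) ℂ) (x y : Fin n → Fin 2) :
    kron (Function.update Q a M) x y =
      M (x a) (y a) * ∏ j ∈ Finset.univ.erase a, Q j (x j) (y j) := by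
  simp only [kron, Matrix.of_apply]
  rw [← Finset.mul_prod_erase _ _ (Finset.mem_univ a), Function.update_self]
  congr 1
  refine Finset.prod_congr rfl fun j hj => ?_
  rw [Function.update_of_ne (Finset.ne_of_mem_erase hj)]

theorem kron_update_smul (Q : Fin n → Matrix (Fin 2) (Fin 2) ℂ) (a : Fin n) (c : ℂ)
    (M : Matrix (Fin 2) (Fin 2) ℂ) :
    kron (Function.update Q a (c • M)) = c • kron (Function.update Q a M) := by
  ext x y
  simp [kron_update_apply, mul_assoc]

theorem onQubit_eq_kron_update (a : Fin n) (M : Matrix (Fin 2) (Fin 2) ℂ) :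
    onQubit a M = kron (Function.update 1 a M) := by
  unfold onQubit
  congr 1
  funext j
  simp [Function.update_apply]

theorem onQubit_smul (a : Fin n) (c : ℂ) (M : Matrix (Fin 2) (Fin 2) ℂ) :
    onQubit a (c • M) = c • onQubit a M := by
  simp only [onQubit_eq_kron_update, kron_update_smul]

theorem onQubit_add (a : Fin n) (M N : Matrix (Fin 2) (Fin 2) ℂ) :
    onQubit a (M + N) = onQubit a M + onQubit a N := by
  ext x y
  simp [onQubit_eq_kron_update, kron_update_apply, add_mul]

theorem onQubit_one (a : Fin n) : onQubit a 1 = 1 := by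
  rw [onQubit_eq_kron_update, ← kron_one]
  congr 1
  exact Function.update_eq_self a 1

theorem kron_mul_onQubit (Q : Fin n → Matrix (Fin 2) (Fin 2) ℂ) (a : Fin n)
    (M : Matrix (Fin 2) (Fin 2) ℂ) :
    kron Q * onQubit a M = kron (Function.update Q a (Q a * M)) := by
  rw [onQubit, kron_mul]
  congr 1
  funext j
  by_cases h : j = a
  · subst h; simp
  · simp [h]

theorem onQubit_mul_kron (Q : Fin n → Matrix (Fin 2) (Fin 2) ℂ) (a : Fin n)
    (M : Matrix (Fin 2) (Fin 2) ℂ) :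
    onQubit a M * kron Q = kron (Function.update Q a (M * Q a)) := by
  rw [onQubit, kron_mul]
  congr 1
  funext j
  by_cases h : j = a
  · subst h; simp
  · simp [h]

theorem onQubit_mul_onQubit (a : Fin n) (M N : Matrix (Fin 2) (Fin 2) ℂ) :
    onQubit a M * onQubit a N = onQubit a (M * N) := by
  rw [onQubit_eq_kron_update a M, kron_mul_onQubit, onQubit_eq_kron_update]
  simp

theorem onQubit_commute {a b : Fin n} (h : a ≠ b) (M N : Matrix (Fin 2) (Fin 2) ℂ) :
    Commute (onQubit a M) (onQubit b N) := by
  rw [Commute, SemiconjBy, onQubit_eq_kron_update a M, kron_mul_onQubit, onQubit_mul_kron]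
  simp [Function.update_of_ne h.symm]

/-! ### One-qubit Pauli matrices -/

/-- A one-qubit Pauli matrix (phase `1`). -/
def IsPauli (M : Matrix (Fin 2) (Fin 2) ℂ) : Prop := M = 1 ∨ M = pX ∨ M = pY ∨ M = pZ

theorem pX_mul_pX : pX * pX = 1 := by
  ext i j; fin_cases i <;> fin_cases j <;> simp [pX]

theorem pY_mul_pY : pY * pY = 1 := by
  ext i j; fin_cases i <;> fin_cases j <;> simp [pY]

theorem pZ_mul_pZ : pZ * pZ = 1 := by
  ext i j; fin_cases i <;> fin_cases j <;> simp [pZ]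

theorem pX_mul_pY : pX * pY = Complex.I • pZ := by
  ext i j; fin_cases i <;> fin_cases j <;> simp [pX, pY, pZ]

theorem pY_mul_pX : pY * pX = (-Complex.I) • pZ := by
  ext i j; fin_cases i <;> fin_cases j <;> simp [pX, pY, pZ]

theorem pY_mul_pZ : pY * pZ = Complex.I • pX := by
  ext i j; fin_cases i <;> fin_cases j <;> simp [pX, pY, pZ]

theorem pZ_mul_pY : pZ * pY = (-Complex.I) • pX := by
  ext i j; fin_cases i <;> fin_cases j <;> simp [pX, pY, pZ]

theorem pZ_mul_pX : pZ * pX = Complex.I • pY := by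
  ext i j; fin_cases i <;> fin_cases j <;> simp [pX, pY, pZ]

theorem pX_mul_pZ : pX * pZ = (-Complex.I) • pY := by
  ext i j; fin_cases i <;> fin_cases j <;> simp [pX, pY, pZ]

theorem IsPauli.mul_self {M : Matrix (Fin 2) (Fin 2) ℂ} (h : IsPauli M) : M * M = 1 := by
  rcases h with rfl | rfl | rfl | rfl <;> simp [pX_mul_pX, pY_mul_pY, pZ_mul_pZ]

theorem IsPauli.exists_mul_eq_smul {M N : Matrix (Fin 2) (Fin 2) ℂ} (hM : IsPauli M)
    (hN : IsPauli N) : ∃ c : ℂ, c ≠ 0 ∧ ∃ R, IsPauli R ∧ M * N = c • R := by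
  rcases hM with rfl | rfl | rfl | rfl <;> rcases hN with rfl | rfl | rfl | rfl <;>
    simp only [pX_mul_pX, pY_mul_pY, pZ_mul_pZ, pX_mul_pY, pY_mul_pX, pY_mul_pZ, pZ_mul_pY,
      pZ_mul_pX, pX_mul_pZ, mul_one, one_mul] <;>
    first
    | exact ⟨_, Complex.I_ne_zero, _, by simp [IsPauli], rfl⟩
    | exact ⟨_, neg_ne_zero.mpr Complex.I_ne_zero, _, by simp [IsPauli], rfl⟩
    | exact ⟨1, one_ne_zero, _, by simp [IsPauli], (one_smul ℂ _).symm⟩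

theorem IsPauli.exists_mul_comm_sign {M N : Matrix (Fin 2) (Fin 2) ℂ} (hM : IsPauli M)
    (hN : IsPauli N) : ∃ s : ℂ, (s = 1 ∨ s = -1) ∧ M * N = s • (N * M) := by
  rcases hM with rfl | rfl | rfl | rfl <;> rcases hN with rfl | rfl | rfl | rfl <;>
    simp only [pX_mul_pX, pY_mul_pY, pZ_mul_pZ, pX_mul_pY, pY_mul_pX, pY_mul_pZ, pZ_mul_pY,
      pZ_mul_pX, pX_mul_pZ, mul_one, one_mul] <;>
    first
    | exact ⟨1, Or.inl rfl, (one_smul ℂ _).symm⟩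
    | exact ⟨-1, Or.inr rfl, by simp⟩

/-- Two distinct nontrivial Pauli matrices are related by multiplication with the third one, which
anticommutes with them. -/
theorem exists_third_pauli {M N : Matrix (Fin 2) (Fin 2) ℂ} (hM : M = pX ∨ M = pY ∨ M = pZ)
    (hN : N = pX ∨ N = pY ∨ N = pZ) (h : M ≠ N) :
    ∃ R, (R = pX ∨ R = pY ∨ R = pZ) ∧ M * R = (-1 : ℂ) • (R * M) ∧
      ∃ c : ℂ, N = c • (M * R) := by
  have e : ∀ A B : Matrix (Fin 2) (Fin 2) ℂ, A = Complex.I • B → B = (-Complex.I) • A := by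
    rintro A B rfl; simp [smul_smul]
  have e' : ∀ A B : Matrix (Fin 2) (Fin 2) ℂ, A = (-Complex.I) • B → B = Complex.I • A := by
    rintro A B rfl; simp [smul_smul]
  rcases hM with rfl | rfl | rfl <;> rcases hN with rfl | rfl | rfl
  · exact absurd rfl h
  · exact ⟨pZ, by simp, by simp [pX_mul_pZ, pZ_mul_pX], _, e' _ _ pX_mul_pZ⟩
  · exact ⟨pY, by simp, by simp [pX_mul_pY, pY_mul_pX], _, e _ _ pX_mul_pY⟩
  · exact ⟨pZ, by simp, by simp [pY_mul_pZ, pZ_mul_pY], _, e _ _ pY_mul_pZ⟩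
  · exact absurd rfl h
  · exact ⟨pX, by simp, by simp [pY_mul_pX, pX_mul_pY], _, e' _ _ pY_mul_pX⟩
  · exact ⟨pY, by simp, by simp [pY_mul_pZ, pZ_mul_pY], _, e' _ _ pZ_mul_pY⟩
  · exact ⟨pX, by simp, by simp [pX_mul_pZ, pZ_mul_pX], _, e _ _ pZ_mul_pX⟩
  · exact absurd rfl h

/-! ### Real-phase Pauli operators -/

theorem kron_mul_self {Q : Fin n → Matrix (Fin 2) (Fin 2) ℂ} (hQ : ∀ j, IsPauli (Q j)) :
    kron Q * kron Q = 1 := by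
  rw [kron_mul, ← kron_one]
  congr 1
  funext j
  exact (hQ j).mul_self

theorem IsRealPauli.mul_self {A : QMat n} (hA : IsRealPauli n A) : A * A = 1 := by
  obtain ⟨ε, hε, Q, hQ, rfl⟩ := hA
  rw [smul_mul_smul_comm, kron_mul_self hQ]
  rcases hε with rfl | rfl <;> simp

theorem IsRealPauli.neg {A : QMat n} (hA : IsRealPauli n A) : IsRealPauli n (-A) := by
  obtain ⟨ε, hε, Q, hQ, rfl⟩ := hA
  refine ⟨-ε, ?_, Q, hQ, by simp⟩
  rcases hε with rfl | rfl <;> simp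

theorem isRealPauli_kron {Q : Fin n → Matrix (Fin 2) (Fin 2) ℂ} (hQ : ∀ j, IsPauli (Q j)) :
    IsRealPauli n (kron Q) :=
  ⟨1, Or.inl rfl, Q, hQ, by simp⟩

theorem isRealPauli_onQubit (a : Fin n) {M : Matrix (Fin 2) (Fin 2) ℂ} (hM : IsPauli M) :
    IsRealPauli n (onQubit a M) := by
  refine isRealPauli_kron fun j => ?_
  split_ifs
  exacts [hM, Or.inl rfl]

theorem IsRealPauli.exists_smul_mul {A B : QMat n} (hA : IsRealPauli n A)
    (hB : IsRealPauli n B) : ∃ c : ℂ, c ≠ 0 ∧ IsRealPauli n (c • (A * B)) := by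
  obtain ⟨ε, hε, P, hP, rfl⟩ := hA
  obtain ⟨δ, hδ, Q, hQ, rfl⟩ := hB
  choose c hc R hR hPQ using fun j => IsPauli.exists_mul_eq_smul (hP j) (hQ j)
  have hc' : ∏ j, c j ≠ 0 := Finset.prod_ne_zero_iff.mpr fun j _ => hc j
  have hε0 : ε ≠ 0 := by rcases hε with rfl | rfl <;> simp
  have hδ0 : δ ≠ 0 := by rcases hδ with rfl | rfl <;> simp
  refine ⟨(ε * δ * ∏ j, c j)⁻¹, by simp [hε0, hδ0, hc'], ?_⟩
  rw [smul_mul_smul_comm, kron_mul, funext hPQ, kron_smul, smul_smul, smul_smul, mul_assoc,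
    inv_mul_cancel₀ (by simp [hε0, hδ0, hc']), one_smul]
  exact isRealPauli_kron hR

/-- Two operators anticommute. -/
def Anticommute (A B : QMat n) : Prop := A * B = -(B * A)

theorem Anticommute.symm {A B : QMat n} (h : Anticommute A B) : Anticommute B A := by
  unfold Anticommute at *
  rw [h, neg_neg]

theorem Anticommute.smul_right {A B : QMat n} (h : Anticommute A B) (c : ℂ) :
    Anticommute A (c • B) := by
  unfold Anticommute at *
  rw [mul_smul_comm, h, smul_mul_assoc, smul_neg]

theorem Anticommute.mul_right {A B C : QMat n} (hB : Anticommute A B) (hC : Commute A C) :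
    Anticommute A (B * C) := by
  unfold Anticommute at *
  rw [← mul_assoc, hB, neg_mul, mul_assoc, hC.eq, mul_assoc]

theorem Anticommute.mul_right' {A B C : QMat n} (hB : Commute A B) (hC : Anticommute A C) :
    Anticommute A (B * C) := by
  unfold Anticommute at *
  rw [← mul_assoc, hB.eq, mul_assoc, hC, mul_neg, mul_assoc]

theorem Anticommute.commute_mul_right {A B C : QMat n} (hB : Anticommute A B)
    (hC : Anticommute A C) : Commute A (B * C) := by
  unfold Anticommute at *
  rw [Commute, SemiconjBy, ← mul_assoc, hB, neg_mul, mul_assoc, hC, mul_neg, neg_neg, mul_assoc]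

theorem IsRealPauli.commute_or_anticommute {A B : QMat n} (hA : IsRealPauli n A)
    (hB : IsRealPauli n B) : Commute A B ∨ Anticommute A B := by
  obtain ⟨ε, -, P, hP, rfl⟩ := hA
  obtain ⟨δ, -, Q, hQ, rfl⟩ := hB
  choose s hs hPQ using fun j => IsPauli.exists_mul_comm_sign (hP j) (hQ j)
  have key : kron P * kron Q = (∏ j, s j) • (kron Q * kron P) := by
    rw [kron_mul, funext hPQ, kron_smul, kron_mul]
  have hprod : ∏ j, s j = 1 ∨ ∏ j, s j = -1 := by
    refine Finset.prod_induction s (fun t => t = 1 ∨ t = -1) ?_ (Or.inl rfl) fun j _ => hs j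
    rintro a b (rfl | rfl) (rfl | rfl) <;> simp
  rcases hprod with h | h <;> rw [h] at key
  · left
    rw [Commute, SemiconjBy, smul_mul_smul_comm, smul_mul_smul_comm, key, one_smul, mul_comm]
  · right
    rw [Anticommute, smul_mul_smul_comm, smul_mul_smul_comm, key, mul_comm ε]
    simp

/-- A scalar making the product of two anticommuting involutions an involution is `±i`. -/
theorem eq_I_or_eq_neg_I_of_smul_mul {A B : QMat n} (hA : A * A = 1) (hB : B * B = 1)
    (h : Anticommute A B) {c : ℂ} (hc : (c • (A * B)) * (c • (A * B)) = 1) :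
    c = Complex.I ∨ c = -Complex.I := by
  have hAB : A * B * (A * B) = -1 := by
    have : A * B * (A * B) = -(A * A * (B * B)) := by
      rw [mul_assoc, ← mul_assoc B, h.symm, neg_mul, mul_neg]
      simp only [mul_assoc]
    rw [this, hA, hB, one_mul]
  rw [smul_mul_smul_comm, hAB] at hc
  have h0 := congrFun (congrFun hc 0) 0
  simp at h0
  have : (c - Complex.I) * (c + Complex.I) = 0 := by
    linear_combination -h0 - Complex.I_mul_I
  rcases mul_eq_zero.mp this with h | h
  · exact Or.inl (sub_eq_zero.mp h)
  · exact Or.inr (eq_neg_of_add_eq_zero_left h)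

theorem IsRealPauli.neg_I_smul_mul {A B : QMat n} (hA : IsRealPauli n A) (hB : IsRealPauli n B)
    (h : Anticommute A B) : IsRealPauli n ((-Complex.I) • (A * B)) := by
  obtain ⟨c, -, hc⟩ := hA.exists_smul_mul hB
  rcases eq_I_or_eq_neg_I_of_smul_mul hA.mul_self hB.mul_self h hc.mul_self with rfl | rfl
  · simpa using hc.neg
  · exact hc

theorem IsRealPauli.I_smul_mul {A B : QMat n} (hA : IsRealPauli n A) (hB : IsRealPauli n B)
    (h : Anticommute A B) : IsRealPauli n (Complex.I • (A * B)) := by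
  simpa using (hA.neg_I_smul_mul hB h).neg

/-! ### Pauli rotations `1 + iP` in the Clifford group -/

/-- `P` is an involution whose quarter rotation `1 + iP` is, up to a scalar, a Clifford
operator. -/
def HasCliffordRotation (P : QMat n) : Prop :=
  P * P = 1 ∧ ∃ U ∈ CliffordGroup n, ∃ c : ℂ, c ≠ 0 ∧ U = c • (1 + Complex.I • P)

theorem one_add_I_smul_mul {P : QMat n} (hP : P * P = 1) :
    (1 + Complex.I • P) * (1 + (-Complex.I) • P) = (2 : ℂ) • 1 := by
  simp only [add_mul, mul_add, one_mul, mul_one, smul_mul_smul_comm, hP]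
  simp only [mul_neg, Complex.I_mul_I]
  module

theorem one_add_I_smul_mul_self {P : QMat n} (hP : P * P = 1) :
    (1 + Complex.I • P) * (1 + Complex.I • P) = (2 * Complex.I) • P := by
  simp only [add_mul, mul_add, one_mul, mul_one, smul_mul_smul_comm, hP]
  simp only [Complex.I_mul_I]
  module

theorem HasCliffordRotation.neg {P : QMat n} (h : HasCliffordRotation P) :
    HasCliffordRotation (-P) := by
  obtain ⟨hP, U, hU, c, hc, rfl⟩ := h
  refine ⟨by simpa using hP, _, mul_mem (mul_mem hU hU) hU, c * c * c * -2, by simp [hc], ?_⟩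
  rw [smul_mul_smul_comm, smul_mul_smul_comm, one_add_I_smul_mul_self hP, mul_smul, mul_add,
    mul_one, smul_mul_smul_comm, hP, mul_assoc 2, Complex.I_mul_I]
  module

theorem HasCliffordRotation.conj {P Q V V' : QMat n} (h : HasCliffordRotation P)
    (hV : V ∈ CliffordGroup n) (hV' : V' ∈ CliffordGroup n) {d : ℂ} (hd : d ≠ 0)
    (hVV' : V * V' = d • 1) (hQ : Q * Q = 1) (hPQ : V * P = Q * V) : HasCliffordRotation Q := by
  obtain ⟨-, U, hU, c, hc, rfl⟩ := h
  refine ⟨hQ, _, mul_mem (mul_mem hV hU) hV', c * d, mul_ne_zero hc hd, ?_⟩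
  have : V * (1 + Complex.I • P) = (1 + Complex.I • Q) * V := by
    simp only [mul_add, add_mul, mul_one, one_mul, mul_smul_comm, smul_mul_assoc, hPQ]
  rw [mul_smul_comm, this, smul_mul_assoc, mul_assoc, hVV', mul_smul_comm, mul_one, smul_smul]

theorem one_add_I_smul_mul_of_anticommute {P Q : QMat n} (hP : P * P = 1) (h : Anticommute P Q) :
    (1 + Complex.I • P) * Q = (Complex.I • (P * Q)) * (1 + Complex.I • P) := by
  have h' : P * Q * P = -Q := by
    rw [h, neg_mul, mul_assoc, hP, mul_one]
  simp only [mul_add, add_mul, mul_one, one_mul, smul_mul_assoc, mul_smul_comm, smul_smul, h',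
    Complex.I_mul_I]
  module

theorem HasCliffordRotation.smul_mul {P Q : QMat n} (hP : HasCliffordRotation P)
    (hQ : HasCliffordRotation Q) (h : Anticommute P Q) {c : ℂ}
    (hc : (c • (P * Q)) * (c • (P * Q)) = 1) : HasCliffordRotation (c • (P * Q)) := by
  have key : HasCliffordRotation (Complex.I • (P * Q)) := by
    have hI : (Complex.I • (P * Q)) * (Complex.I • (P * Q)) = 1 := by
      rcases eq_I_or_eq_neg_I_of_smul_mul hP.1 hQ.1 h hc with rfl | rfl
      · exact hc
      · simpa using hc
    obtain ⟨-, U, hU, e, he, hUe⟩ := hP.neg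
    obtain ⟨hPP, V, hV, d, hd, hVd⟩ := hP
    refine hQ.conj hV hU (d := d * e * 2) (by simp [hd, he]) ?_ hI ?_
    · have := one_add_I_smul_mul hPP
      rw [neg_smul, ← smul_neg] at this
      rw [hVd, hUe, smul_mul_smul_comm, this, smul_smul]
    · rw [hVd, smul_mul_assoc, one_add_I_smul_mul_of_anticommute hPP h, mul_smul_comm]
  rcases eq_I_or_eq_neg_I_of_smul_mul hP.1 hQ.1 h hc with rfl | rfl
  · exact key
  · simpa using key.neg

theorem onQubit_mul_self (a : Fin n) {M : Matrix (Fin 2) (Fin 2) ℂ} (hM : IsPauli M) :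
    onQubit a M * onQubit a M = 1 :=
  (isRealPauli_onQubit a hM).mul_self

theorem hasCliffordRotation_pZ (a : Fin n) : HasCliffordRotation (onQubit a pZ) := by
  suffices HasCliffordRotation (-onQubit a pZ) by simpa using this.neg
  refine ⟨by simpa using onQubit_mul_self a (by simp [IsPauli]), onQubit a phGate,
    Submonoid.subset_closure (Or.inr (Or.inl ⟨a, rfl⟩)), (1 + Complex.I) / 2, ?_, ?_⟩
  · intro h
    simpa using congrArg Complex.re h
  · have : phGate = ((1 + Complex.I) / 2) • (1 + (-Complex.I) • pZ) := by
      ext i j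
      fin_cases i <;> fin_cases j <;> simp [phGate, pZ] <;>
        ring_nf <;> simp only [Complex.I_sq] <;> ring
    rw [this, onQubit_smul, onQubit_add, onQubit_one, onQubit_smul]
    simp

theorem hGate_mul_hGate : hGate * hGate = 1 := by
  have h2 : ((Real.sqrt 2 : ℂ)⁻¹) * ((Real.sqrt 2 : ℂ)⁻¹) = 1 / 2 := by
    rw [← mul_inv, ← Complex.ofReal_mul, Real.mul_self_sqrt (by norm_num)]
    norm_num
  rw [hGate, smul_mul_smul_comm, h2]
  ext i j
  fin_cases i <;> fin_cases j <;> simp <;> norm_num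

theorem hGate_mul_pZ : hGate * pZ = pX * hGate := by
  rw [hGate, smul_mul_assoc, mul_smul_comm]
  congr 1
  ext i j
  fin_cases i <;> fin_cases j <;> simp [pX, pZ]

theorem hasCliffordRotation_pX (a : Fin n) : HasCliffordRotation (onQubit a pX) := by
  have hH : onQubit a hGate ∈ CliffordGroup n := Submonoid.subset_closure (Or.inl ⟨a, rfl⟩)
  refine (hasCliffordRotation_pZ a).conj hH hH one_ne_zero ?_
    (onQubit_mul_self a (by simp [IsPauli])) ?_
  · rw [onQubit_mul_onQubit, hGate_mul_hGate, onQubit_one, one_smul]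
  · rw [onQubit_mul_onQubit, onQubit_mul_onQubit, hGate_mul_pZ]

theorem onQubit_anticommute (a : Fin n) {M N : Matrix (Fin 2) (Fin 2) ℂ}
    (h : M * N = (-1 : ℂ) • (N * M)) : Anticommute (onQubit a M) (onQubit a N) := by
  rw [Anticommute, onQubit_mul_onQubit, onQubit_mul_onQubit, h, onQubit_smul, neg_one_smul]

theorem hasCliffordRotation_onQubit (a : Fin n) {M : Matrix (Fin 2) (Fin 2) ℂ}
    (hM : M = pX ∨ M = pY ∨ M = pZ) : HasCliffordRotation (onQubit a M) := by
  rcases hM with rfl | rfl | rfl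
  · exact hasCliffordRotation_pX a
  · have hY : onQubit a pY = (-Complex.I) • (onQubit a pZ * onQubit a pX) := by
      rw [onQubit_mul_onQubit, pZ_mul_pX, onQubit_smul, smul_smul]
      simp
    rw [hY]
    refine (hasCliffordRotation_pZ a).smul_mul (hasCliffordRotation_pX a)
      (onQubit_anticommute a (by simp [pX_mul_pZ, pZ_mul_pX])) ?_
    rw [← hY]
    exact onQubit_mul_self a (by simp [IsPauli])
  · exact hasCliffordRotation_pZ a

theorem onQubit_pZ (a : Fin n) :
    onQubit a pZ = Matrix.diagonal fun x => if x a = 0 then 1 else -1 := by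
  ext x y
  rw [onQubit_eq_kron_update, kron_update_apply, Matrix.diagonal_apply]
  by_cases h : x = y
  · subst h
    have : x a = 0 ∨ x a = 1 := by omega
    rcases this with h | h <;> simp [h, pZ]
  · rw [if_neg h]
    obtain ⟨j, hj⟩ := Function.ne_iff.mp h
    by_cases hja : j = a
    · subst hja
      have : pZ (x j) (y j) = 0 := by
        generalize x j = u at *
        generalize y j = v at *
        fin_cases u <;> fin_cases v <;> simp_all [pZ]
      rw [this, zero_mul]
    · rw [Finset.prod_eq_zero (i := j) (by simp [hja]) (by simp [hj]), mul_zero]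

theorem cnotGate_mul_self {a b : Fin n} (h : a ≠ b) : cnotGate a b * cnotGate a b = 1 := by
  ext x y
  have hf : Function.update (Function.update y b (y b + y a)) b
      (Function.update y b (y b + y a) b + Function.update y b (y b + y a) a) = y := by
    have : y b + y a + y a = y b := by
      generalize y a = u
      generalize y b = v
      revert u v
      decide
    simp [Function.update_of_ne h, this]
  simp only [cnotGate, Matrix.mul_apply, Matrix.of_apply, mul_ite, mul_one, mul_zero,
    Finset.sum_ite_eq', Finset.mem_univ, if_true, hf, Matrix.one_apply]

theorem cnotGate_mul_pZ {a b : Fin n} (h : a ≠ b) :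
    cnotGate a b * onQubit b pZ = onQubit a pZ * onQubit b pZ * cnotGate a b := by
  rw [onQubit_pZ, onQubit_pZ, Matrix.diagonal_mul_diagonal]
  ext x y
  rw [Matrix.mul_diagonal, Matrix.diagonal_mul]
  simp only [cnotGate, Matrix.of_apply]
  by_cases hxy : x = Function.update y b (y b + y a)
  · subst hxy
    simp only [Function.update_self, Function.update_of_ne h]
    generalize y a = u
    generalize y b = v
    fin_cases u <;> fin_cases v <;> simp
  · simp [hxy]

theorem hasCliffordRotation_pZ_mul_pZ {a b : Fin n} (h : a ≠ b) :
    HasCliffordRotation (onQubit a pZ * onQubit b pZ) := by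
  have hC : cnotGate a b ∈ CliffordGroup n :=
    Submonoid.subset_closure (Or.inr (Or.inr ⟨a, b, h, rfl⟩))
  refine (hasCliffordRotation_pZ b).conj hC hC one_ne_zero ?_ ?_ (cnotGate_mul_pZ h)
  · rw [cnotGate_mul_self h, one_smul]
  · rw [(onQubit_commute h.symm pZ pZ).mul_mul_mul_comm, onQubit_mul_self a (by simp [IsPauli]),
      onQubit_mul_self b (by simp [IsPauli]), one_mul]

theorem isPauli_update {Q : Fin n → Matrix (Fin 2) (Fin 2) ℂ} (hQ : ∀ j, IsPauli (Q j))
    (a : Fin n) {M : Matrix (Fin 2) (Fin 2) ℂ} (hM : IsPauli M) (j : Fin n) :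
    IsPauli (Function.update Q a M j) := by
  rw [Function.update_apply]
  split_ifs
  exacts [hM, hQ j]

/-- One may replace a nontrivial tensor factor by any other nontrivial one. -/
theorem HasCliffordRotation.update {Q : Fin n → Matrix (Fin 2) (Fin 2) ℂ}
    (hQ : ∀ j, IsPauli (Q j)) (h : HasCliffordRotation (kron Q)) (a : Fin n)
    (ha : Q a = pX ∨ Q a = pY ∨ Q a = pZ) {M : Matrix (Fin 2) (Fin 2) ℂ}
    (hM : M = pX ∨ M = pY ∨ M = pZ) : HasCliffordRotation (kron (Function.update Q a M)) := by
  by_cases hne : Q a = M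
  · rwa [← hne, Function.update_eq_self]
  obtain ⟨R, hR, hanti, c, hc⟩ := exists_third_pauli ha hM hne
  have hsq := kron_mul_self (isPauli_update hQ a (Or.inr hM))
  have heq : kron (Function.update Q a M) = c • (kron Q * onQubit a R) := by
    rw [kron_mul_onQubit, hc, kron_update_smul]
  rw [heq] at hsq ⊢
  refine h.smul_mul (hasCliffordRotation_onQubit a hR) ?_ hsq
  rw [Anticommute, kron_mul_onQubit, onQubit_mul_kron, hanti, kron_update_smul, neg_one_smul]

theorem hasCliffordRotation_one : HasCliffordRotation (1 : QMat n) := by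
  have h : (1 + Complex.I : ℂ) ≠ 0 := fun h => by simpa using congrArg Complex.re h
  refine ⟨one_mul 1, 1, one_mem _, (1 + Complex.I)⁻¹, inv_ne_zero h, ?_⟩
  have : (1 + Complex.I • 1 : QMat n) = (1 + Complex.I) • 1 := by module
  rw [this, smul_smul, inv_mul_cancel₀ h, one_smul]

theorem hasCliffordRotation_pX_mul_pZ {a b : Fin n} (h : a ≠ b) :
    HasCliffordRotation (onQubit a pX * onQubit b pZ) := by
  have hZZ := hasCliffordRotation_pZ_mul_pZ h
  have e : ∀ M, onQubit a M * onQubit b pZ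
      = kron (Function.update (Function.update 1 a M) b pZ) := fun M => by
    rw [onQubit_eq_kron_update a, kron_mul_onQubit]
    simp [Function.update_of_ne h.symm]
  rw [e] at hZZ ⊢
  have hP := isPauli_update (isPauli_update (Q := 1) (fun _ => Or.inl rfl) a (M := pZ)
    (by simp [IsPauli])) b (M := pZ) (by simp [IsPauli])
  have := hZZ.update hP a (by simp [Function.update_of_ne h]) (M := pX) (by simp)
  rwa [Function.update_comm h.symm, Function.update_idem] at this

theorem hasCliffordRotation_kron (s : Finset (Fin n)) :
    ∀ Q : Fin n → Matrix (Fin 2) (Fin 2) ℂ, (∀ j, IsPauli (Q j)) → (∀ j ∉ s, Q j = 1) →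
      HasCliffordRotation (kron Q) := by
  induction s using Finset.induction_on with
  | empty =>
    intro Q _ hs
    have : Q = 1 := funext fun j => hs j (by simp)
    rw [this, kron_one]
    exact hasCliffordRotation_one
  | insert b s _ ih =>
    intro Q hQ hs
    rcases hQ b with hb | hb
    · refine ih Q hQ fun j hj => ?_
      by_cases hjb : j = b
      · rw [hjb, hb]
      · exact hs j (by simp [hjb, hj])
    by_cases hex : ∃ a, a ≠ b ∧ Q a ≠ 1
    · obtain ⟨a, hab, ha1⟩ := hex
      have ha := (hQ a).resolve_left ha1
      have has : a ∈ s := by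
        by_contra hc
        exact ha1 (hs a (by simp [hab, hc]))
      set Q₀ := Function.update (Function.update Q b 1) a pZ with hQ₀
      have hQ₀P : ∀ j, IsPauli (Q₀ j) :=
        isPauli_update (isPauli_update hQ b (Or.inl rfl)) a (by simp [IsPauli])
      have h₀ : HasCliffordRotation (kron Q₀) := by
        refine ih Q₀ hQ₀P fun j hj => ?_
        have hja : j ≠ a := fun h => hj (h ▸ has)
        rw [hQ₀, Function.update_of_ne hja, Function.update_apply]
        split_ifs with hjb
        · rfl
        · exact hs j (by simp [hjb, hj])
      set Q₁ := Function.update (Function.update Q a pY) b pZ with hQ₁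
      have hQ₁P : ∀ j, IsPauli (Q₁ j) :=
        isPauli_update (isPauli_update hQ a (by simp [IsPauli])) b (by simp [IsPauli])
      have heq : kron Q₁ = (-Complex.I) • (kron Q₀ * (onQubit a pX * onQubit b pZ)) := by
        rw [← mul_assoc, kron_mul_onQubit, kron_mul_onQubit]
        simp only [hQ₀, Function.update_self, Function.update_idem, Function.update_of_ne hab.symm,
          one_mul, pZ_mul_pX]
        rw [Function.update_comm hab, kron_update_smul, smul_smul, Function.update_idem,
          Function.update_comm hab.symm]
        simp [hQ₁]
      have h₁ : HasCliffordRotation (kron Q₁) := by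
        have hsq := kron_mul_self hQ₁P
        rw [heq] at hsq ⊢
        refine h₀.smul_mul (hasCliffordRotation_pX_mul_pZ hab) ?_ hsq
        refine Anticommute.mul_right ?_ ?_
        · rw [Anticommute, kron_mul_onQubit, onQubit_mul_kron]
          simp only [hQ₀, Function.update_self, pZ_mul_pX, pX_mul_pZ, kron_update_smul]
          rw [neg_smul, neg_neg]
        · rw [Commute, SemiconjBy, kron_mul_onQubit, onQubit_mul_kron]
          simp [hQ₀, Function.update_of_ne hab.symm]
      have h₂ := h₁.update hQ₁P b (by simp [hQ₁]) hb
      have h₃ := h₂.update (isPauli_update hQ₁P b (hQ b)) a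
        (by simp [hQ₁, Function.update_of_ne hab]) ha
      convert h₃ using 2
      funext j
      simp only [hQ₁, Function.update_apply]
      split_ifs with h1 h2 <;> simp_all
    · push Not at hex
      have : kron Q = onQubit b (Q b) := by
        rw [onQubit_eq_kron_update]
        congr 1
        funext j
        rw [Function.update_apply]
        split_ifs with hj
        · rw [hj]
        · exact hex j hj
      rw [this]
      exact hasCliffordRotation_onQubit b hb

theorem IsRealPauli.hasCliffordRotation {A : QMat n} (hA : IsRealPauli n A) :
    HasCliffordRotation A := by
  obtain ⟨ε, hε, Q, hQ, rfl⟩ := hA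
  have h := hasCliffordRotation_kron Finset.univ Q hQ (by simp)
  rcases hε with rfl | rfl
  · simpa using h
  · simpa using h.neg

/-! ### Symplectic transitivity -/

/-- Invertible Clifford operators which normalize the real-phase Pauli operators. -/
structure IsPauliNormalizing (W : QMat n) : Prop where
  mem : W ∈ CliffordGroup n
  isUnit : IsUnit W
  image : ∀ Q, IsRealPauli n Q → ∃ Q', IsRealPauli n Q' ∧ SemiconjBy W Q Q'
  preimage : ∀ Q, IsRealPauli n Q → ∃ Q', IsRealPauli n Q' ∧ SemiconjBy W Q' Q

theorem IsPauliNormalizing.one : IsPauliNormalizing (1 : QMat n) :=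
  ⟨one_mem _, isUnit_one, fun Q hQ => ⟨Q, hQ, SemiconjBy.one_left Q⟩,
    fun Q hQ => ⟨Q, hQ, SemiconjBy.one_left Q⟩⟩

theorem IsPauliNormalizing.mul {V W : QMat n} (hV : IsPauliNormalizing V)
    (hW : IsPauliNormalizing W) : IsPauliNormalizing (V * W) := by
  refine ⟨mul_mem hV.mem hW.mem, hV.isUnit.mul hW.isUnit, fun Q hQ => ?_, fun Q hQ => ?_⟩
  · obtain ⟨Q', hQ', h⟩ := hW.image Q hQ
    obtain ⟨Q'', hQ'', h'⟩ := hV.image Q' hQ'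
    exact ⟨Q'', hQ'', h'.mul_left h⟩
  · obtain ⟨Q', hQ', h⟩ := hV.preimage Q hQ
    obtain ⟨Q'', hQ'', h'⟩ := hW.preimage Q' hQ'
    exact ⟨Q'', hQ'', h.mul_left h'⟩

theorem semiconjBy_commute_image {W A B A' B' : QMat n} (hW : IsUnit W) (hA : SemiconjBy W A A')
    (hB : SemiconjBy W B B') (h : Commute A B) : Commute A' B' := by
  apply hW.mul_right_cancel
  rw [← (hA.mul_right hB).eq, h.eq, (hB.mul_right hA).eq]

theorem semiconjBy_commute_preimage {W A B A' B' : QMat n} (hW : IsUnit W)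
    (hA : SemiconjBy W A A') (hB : SemiconjBy W B B') (h : Commute A' B') : Commute A B := by
  apply hW.mul_left_cancel
  rw [(hA.mul_right hB).eq, h.eq, (hB.mul_right hA).eq]

theorem semiconjBy_anticommute_image {W A B A' B' : QMat n} (hW : IsUnit W)
    (hA : SemiconjBy W A A') (hB : SemiconjBy W B B') (h : Anticommute A B) :
    Anticommute A' B' := by
  apply hW.mul_right_cancel
  rw [← (hA.mul_right hB).eq, h, mul_neg, (hB.mul_right hA).eq, neg_mul]

theorem semiconjBy_anticommute_preimage {W A B A' B' : QMat n} (hW : IsUnit W)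
    (hA : SemiconjBy W A A') (hB : SemiconjBy W B B') (h : Anticommute A' B') :
    Anticommute A B := by
  apply hW.mul_left_cancel
  rw [(hA.mul_right hB).eq, h, mul_neg, (hB.mul_right hA).eq, neg_mul]

/-- The Clifford rotation attached to a real-phase Pauli operator acts as a symplectic
transvection. -/
theorem exists_transvection {P : QMat n} (hP : IsRealPauli n P) :
    ∃ W, IsPauliNormalizing W ∧ (∀ Q, Commute P Q → SemiconjBy W Q Q) ∧
      ∀ Q, Anticommute P Q → SemiconjBy W Q (Complex.I • (P * Q)) := by
  obtain ⟨hPP, W, hW, c, hc, hWc⟩ := hP.hasCliffordRotation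
  have hcomm : ∀ Q, Commute P Q → SemiconjBy W Q Q := fun Q hQ => by
    rw [hWc]
    exact ((Commute.one_left Q).add_left (hQ.smul_left Complex.I)).smul_left c
  have hanti : ∀ Q, Anticommute P Q → SemiconjBy W Q (Complex.I • (P * Q)) := fun Q hQ => by
    rw [hWc, SemiconjBy, smul_mul_assoc, one_add_I_smul_mul_of_anticommute hPP hQ, mul_smul_comm]
  refine ⟨W, ⟨hW, ?_, fun Q hQ => ?_, fun Q hQ => ?_⟩, hcomm, hanti⟩
  · refine IsUnit.of_mul_eq_one ((c⁻¹ * 2⁻¹) • (1 + (-Complex.I) • P)) ?_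
    rw [hWc, smul_mul_smul_comm, one_add_I_smul_mul hPP, smul_smul]
    have : c * (c⁻¹ * 2⁻¹) * 2 = 1 := by field_simp
    rw [this, one_smul]
  · rcases hP.commute_or_anticommute hQ with h | h
    · exact ⟨Q, hQ, hcomm Q h⟩
    · exact ⟨_, hP.I_smul_mul hQ h, hanti Q h⟩
  · rcases hP.commute_or_anticommute hQ with h | h
    · exact ⟨Q, hQ, hcomm Q h⟩
    · refine ⟨_, hP.neg_I_smul_mul hQ h, ?_⟩
      have hPPQ : Anticommute P ((-Complex.I) • (P * Q)) :=
        (Anticommute.mul_right' (Commute.refl P) h).smul_right _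
      have := hanti _ hPPQ
      rwa [mul_smul_comm, ← mul_assoc, hPP, one_mul, smul_smul, mul_neg, Complex.I_mul_I, neg_neg,
        one_smul] at this

theorem exists_semiconjBy_of_anticommute {A B : QMat n} (hA : IsRealPauli n A)
    (hB : IsRealPauli n B) (h : Anticommute A B) :
    ∃ W, IsPauliNormalizing W ∧ SemiconjBy W A B ∧
      (∀ Q, Commute Q A → Commute Q B → SemiconjBy W Q Q) ∧
      ∀ Q, Anticommute Q A → Anticommute Q B → SemiconjBy W Q Q := by
  obtain ⟨W, hW, hcomm, hanti⟩ := exists_transvection (hB.neg_I_smul_mul hA h.symm)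
  refine ⟨W, hW, ?_, fun Q hQA hQB => ?_, fun Q hQA hQB => ?_⟩
  · have := hanti A ((Anticommute.mul_right h (Commute.refl A)).smul_right _).symm
    rwa [smul_mul_assoc, mul_assoc, hA.mul_self, mul_one, smul_smul, mul_neg, Complex.I_mul_I,
      neg_neg, one_smul] at this
  · exact hcomm Q ((hQB.mul_right hQA).smul_right _).symm
  · exact hcomm Q ((hQB.commute_mul_right hQA).smul_right _).symm

/-- Composite of two moves, through an intermediate operator `C`. -/
theorem exists_semiconjBy_of_anticommute_both {A B C : QMat n} (hA : IsRealPauli n A)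
    (hB : IsRealPauli n B) (hC : IsRealPauli n C) (hCA : Anticommute C A)
    (hCB : Anticommute C B) :
    ∃ W, IsPauliNormalizing W ∧ SemiconjBy W A B ∧
      (∀ Q, Commute Q A → Commute Q B → Commute Q C → SemiconjBy W Q Q) ∧
      ∀ Q, Anticommute Q A → Anticommute Q B → Anticommute Q C → SemiconjBy W Q Q := by
  obtain ⟨V, hV, hVA, hV₁, hV₂⟩ := exists_semiconjBy_of_anticommute hA hC hCA.symm
  obtain ⟨W, hW, hWC, hW₁, hW₂⟩ := exists_semiconjBy_of_anticommute hC hB hCB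
  exact ⟨W * V, hW.mul hV, hWC.mul_left hVA,
    fun Q hQA hQB hQC => (hW₁ Q hQC hQB).mul_left (hV₁ Q hQA hQC),
    fun Q hQA hQB hQC => (hW₂ Q hQC hQB).mul_left (hV₂ Q hQA hQC)⟩

theorem exists_semiconjBy_fst {A B A' B' : QMat n} (hA : IsRealPauli n A) (hB : IsRealPauli n B)
    (hA' : IsRealPauli n A') (hB' : IsRealPauli n B') (h : Anticommute A B)
    (h' : Anticommute A' B') :
    ∃ W, IsPauliNormalizing W ∧ SemiconjBy W A A' ∧
      ∀ Q, Commute Q A → Commute Q B → Commute Q A' → Commute Q B' → SemiconjBy W Q Q := by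
  obtain ⟨C, hC, hCA, hCA', hCQ⟩ : ∃ C, IsRealPauli n C ∧ Anticommute C A ∧ Anticommute C A' ∧
      ∀ Q, Commute Q B → Commute Q B' → Commute Q C := by
    rcases hA'.commute_or_anticommute hB with h₁ | h₁
    · rcases hA.commute_or_anticommute hB' with h₂ | h₂
      · obtain ⟨c, -, hc⟩ := hB.exists_smul_mul hB'
        exact ⟨_, hc, ((h.mul_right h₂).smul_right c).symm,
          ((Anticommute.mul_right' h₁ h').smul_right c).symm,
          fun Q hQ hQ' => (hQ.mul_right hQ').smul_right c⟩
      · exact ⟨B', hB', h₂.symm, h'.symm, fun Q _ hQ' => hQ'⟩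
    · exact ⟨B, hB, h.symm, h₁.symm, fun Q hQ _ => hQ⟩
  obtain ⟨W, hW, hWA, hWQ, -⟩ := exists_semiconjBy_of_anticommute_both hA hA' hC hCA hCA'
  exact ⟨W, hW, hWA, fun Q hQA hQB hQA' hQB' => hWQ Q hQA hQA' (hCQ Q hQB hQB')⟩

theorem exists_semiconjBy_snd {A B B' : QMat n} (hA : IsRealPauli n A) (hB : IsRealPauli n B)
    (hB' : IsRealPauli n B') (h : Anticommute A B) (h' : Anticommute A B') :
    ∃ W, IsPauliNormalizing W ∧ SemiconjBy W A A ∧ SemiconjBy W B B' ∧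
      ∀ Q, Commute Q A → Commute Q B → Commute Q B' → SemiconjBy W Q Q := by
  rcases hB.commute_or_anticommute hB' with h₁ | h₁
  · obtain ⟨c, -, hc⟩ := hA.exists_smul_mul hB
    obtain ⟨W, hW, hWB, hWQ, hWA⟩ := exists_semiconjBy_of_anticommute_both hB hB' hc
      ((h.symm.mul_right (Commute.refl B)).smul_right c).symm
      ((h'.symm.mul_right h₁.symm).smul_right c).symm
    exact ⟨W, hW, hWA A h h' ((Anticommute.mul_right' (Commute.refl A) h).smul_right c), hWB,
      fun Q hQA hQB hQB' => hWQ Q hQB hQB' ((hQA.mul_right hQB).smul_right c)⟩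
  · obtain ⟨W, hW, hWB, hWQ, hWA⟩ := exists_semiconjBy_of_anticommute hB hB' h₁
    exact ⟨W, hW, hWA A h h', hWB, fun Q _ hQB hQB' => hWQ Q hQB hQB'⟩

/-- Anticommuting pairs of real-phase Pauli operators are conjugate under the Clifford group, by an
operator that fixes everything commuting with both pairs. -/
theorem exists_semiconjBy_pair {A B A' B' : QMat n} (hA : IsRealPauli n A) (hB : IsRealPauli n B)
    (hA' : IsRealPauli n A') (hB' : IsRealPauli n B') (h : Anticommute A B)
    (h' : Anticommute A' B') :
    ∃ W, IsPauliNormalizing W ∧ SemiconjBy W A A' ∧ SemiconjBy W B B' ∧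
      ∀ Q, Commute Q A → Commute Q B → Commute Q A' → Commute Q B' → SemiconjBy W Q Q := by
  obtain ⟨V, hV, hVA, hVQ⟩ := exists_semiconjBy_fst hA hB hA' hB' h h'
  obtain ⟨B₁, hB₁, hVB⟩ := hV.image B hB
  obtain ⟨W, hW, hWA, hWB, hWQ⟩ := exists_semiconjBy_snd hA' hB₁ hB'
    (semiconjBy_anticommute_image hV.isUnit hVA hVB h) h'
  refine ⟨W * V, hW.mul hV, hWA.mul_left hVA, hWB.mul_left hVB, fun Q hQA hQB hQA' hQB' => ?_⟩
  have hQ := hVQ Q hQA hQB hQA' hQB'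
  exact (hWQ Q hQA' (semiconjBy_commute_image hV.isUnit hQ hVB hQB) hQB').mul_left hQ

end CliffordTableau

/-- any tableau satisfying the commutativity conditions is realized
by some Clifford unitary: given real-phase Pauli operators `Rx a` (destabilizer rows)
and `Rz a` (stabilizer rows) that pairwise commute except that `Rx a` anticommutes
with `Rz a`, some Clifford unitary `U` maps `X_a ↦ Rx a` and `Z_a ↦ Rz a` by
conjugation. -/
theorem tableau_realized_by_circuit (n : ℕ) (Rx Rz : Fin n → QMat n)
    (hx : ∀ a, IsRealPauli n (Rx a)) (hz : ∀ a, IsRealPauli n (Rz a))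
    (hxx : ∀ a b, Rx a * Rx b = Rx b * Rx a)
    (hzz : ∀ a b, Rz a * Rz b = Rz b * Rz a)
    (hxz : ∀ a b, a ≠ b → Rx a * Rz b = Rz b * Rx a)
    (hanti : ∀ a, Rx a * Rz a = -(Rz a * Rx a)) :
    ∃ U ∈ CliffordGroup n, ∀ a,
      U * onQubit a pX * U⁻¹ = Rx a ∧ U * onQubit a pZ * U⁻¹ = Rz a := by
  have hX : ∀ a, IsRealPauli n (onQubit a pX) := fun a =>
    isRealPauli_onQubit a (by simp [IsPauli])
  have hZ : ∀ a, IsRealPauli n (onQubit a pZ) := fun a =>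
    isRealPauli_onQubit a (by simp [IsPauli])
  have key : ∀ s : Finset (Fin n), ∃ W, IsPauliNormalizing W ∧ ∀ a ∈ s,
      SemiconjBy W (onQubit a pX) (Rx a) ∧ SemiconjBy W (onQubit a pZ) (Rz a) := by
    intro s
    induction s using Finset.induction_on with
    | empty => exact ⟨1, IsPauliNormalizing.one, by simp⟩
    | insert k s hk ih =>
      obtain ⟨W, hW, hWs⟩ := ih
      obtain ⟨A, hA, hWA⟩ := hW.preimage _ (hx k)
      obtain ⟨B, hB, hWB⟩ := hW.preimage _ (hz k)
      obtain ⟨V, hV, hVA, hVB, hVQ⟩ := exists_semiconjBy_pair (hX k) (hZ k) hA hB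
        (onQubit_anticommute k (by simp [pX_mul_pZ, pZ_mul_pX]))
        (semiconjBy_anticommute_preimage hW.isUnit hWA hWB (hanti k))
      refine ⟨W * V, hW.mul hV, fun a ha => ?_⟩
      rcases Finset.mem_insert.mp ha with rfl | has
      · exact ⟨hWA.mul_left hVA, hWB.mul_left hVB⟩
      · have hak : a ≠ k := fun h => hk (h ▸ has)
        obtain ⟨h₁, h₂⟩ := hWs a has
        exact ⟨h₁.mul_left (hVQ _ (onQubit_commute hak _ _) (onQubit_commute hak _ _)
            (semiconjBy_commute_preimage hW.isUnit h₁ hWA (hxx a k))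
            (semiconjBy_commute_preimage hW.isUnit h₁ hWB (hxz a k hak))),
          h₂.mul_left (hVQ _ (onQubit_commute hak _ _) (onQubit_commute hak _ _)
            (semiconjBy_commute_preimage hW.isUnit h₂ hWA (hxz k a hak.symm).symm)
            (semiconjBy_commute_preimage hW.isUnit h₂ hWB (hzz a k)))⟩
  obtain ⟨W, hW, hWs⟩ := key Finset.univ
  have hdet : IsUnit W.det := (Matrix.isUnit_iff_isUnit_det W).mp hW.isUnit
  refine ⟨W, hW.mem, fun a => ?_⟩
  obtain ⟨h₁, h₂⟩ := hWs a (Finset.mem_univ a)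
  exact ⟨by rw [h₁.eq, Matrix.mul_nonsing_inv_cancel_right _ _ hdet],
    by rw [h₂.eq, Matrix.mul_nonsing_inv_cancel_right _ _ hdet]⟩
end
end
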